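/- arXiv:2206.10947 — 2 statements merged into one kernel-verified Lean document; each statement's English description precedes it below -/
import Mathlib

section
/- For all integers N ≥ m ≥ 2, the N-th Taylor coefficient B_{m,N} of Y_m at 0 is given by B_{m,N} = (2^{−(m−1)}/(m+1)) · Σ_{k=1}^{⌊m/2⌋} (−1)^{k+1} tan²(πk/(m+1)) · (1 + tan²(πk/(m+1)))^{−N+(m−1)/2} · 4^N. -/
open scoped Real BigOperators

/-- The generating functions `X_m` of rooted planar trees of height at most `m`:
`X_0 = 0`, `X_1(g) = g`, `X_m(g) = g/(1 - X_{m-1}(g))`. -/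
noncomputable def Xc : ℕ → ℂ → ℂ
  | 0, _ => 0
  | (m + 1), g => g / (1 - Xc m g)

/-- `Y_m(g) = ∏_{k=1}^m X_k(g)`, the generating function of one-sided trees of height `m`. -/
noncomputable def Yc (m : ℕ) (g : ℂ) : ℂ := ∏ k ∈ Finset.Icc 1 m, Xc k g

/-- `B_{m,N}`, the `N`-th Taylor coefficient of `Y_m` at `0`. -/
noncomputable def Bcoef (m N : ℕ) : ℂ := iteratedDeriv N (Yc m) 0 / (N.factorial : ℂ)

open Polynomial Filter Topology

/-- The denominators: `X_m = g F_{m-1} / F_m`. -/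
noncomputable def Fpol : ℕ → ℝ[X]
  | 0 => 1
  | 1 => 1
  | (n + 2) => Fpol (n + 1) - X * Fpol n

lemma Fpol_natDegree (n : ℕ) : (Fpol n).natDegree ≤ n / 2 := by
  induction n using Nat.strong_induction_on with
  | _ n ih =>
    match n with
    | 0 => simp [Fpol]
    | 1 => simp [Fpol]
    | n + 2 =>
      have h1 := ih (n + 1) (by omega)
      have h2 := ih n (by omega)
      rw [Fpol]
      refine (natDegree_sub_le _ _).trans (max_le (by omega) ?_)
      refine natDegree_mul_le.trans ?_
      have : (X : ℝ[X]).natDegree ≤ 1 := natDegree_X_le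
      omega

lemma Fpol_zero (n : ℕ) : (Fpol n).eval 0 = 1 := by
  induction n using Nat.strong_induction_on with
  | _ n ih =>
    match n with
    | 0 => simp [Fpol]
    | 1 => simp [Fpol]
    | n + 2 =>
      have h1 := ih (n + 1) (by omega)
      simp [Fpol, h1]

lemma Fpol_trig (n : ℕ) (t : ℝ) (ht : Real.cos t ≠ 0) :
    (Fpol n).eval (1 / (4 * Real.cos t ^ 2)) * (Real.sin t * (2 * Real.cos t) ^ n)
      = Real.sin ((n + 1) * t) := by
  induction n using Nat.strong_induction_on with
  | _ n ih =>
    match n with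
    | 0 => simp [Fpol]
    | 1 =>
      simp only [Fpol, eval_one]
      norm_num
      rw [Real.sin_two_mul]; ring
    | n + 2 =>
      have h1 := ih (n + 1) (by omega)
      have h2 := ih n (by omega)
      have e : Real.sin (((n + 2 : ℕ) + 1) * t)
          = 2 * Real.cos t * Real.sin (((n + 1 : ℕ) + 1) * t) - Real.sin ((n + 1) * t) := by
        have a1 : (((n + 2 : ℕ) : ℝ) + 1) * t = (((n + 1 : ℕ) : ℝ) + 1) * t + t := by
          push_cast; ring
        have a2 : ((n : ℝ) + 1) * t = (((n + 1 : ℕ) : ℝ) + 1) * t - t := by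
          push_cast; ring
        rw [a1, a2, Real.sin_add, Real.sin_sub]; ring
      rw [e, ← h1, ← h2]
      simp only [Fpol, eval_sub, eval_mul, eval_X]
      field_simp
      ring

lemma Fpol_deriv (n : ℕ) (t : ℝ) (ht : Real.cos t ≠ 0)
    (h0 : (Fpol n).eval (1 / (4 * Real.cos t ^ 2)) = 0) :
    (Fpol n).derivative.eval (1 / (4 * Real.cos t ^ 2)) *
      (Real.sin t / (2 * Real.cos t ^ 3)) * (Real.sin t * (2 * Real.cos t) ^ n)
      = (n + 1) * Real.cos ((n + 1) * t) := by
  have hh : HasDerivAt (fun x => 1 / (4 * Real.cos x ^ 2)) (Real.sin t / (2 * Real.cos t ^ 3)) t := by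
    have := (((Real.hasDerivAt_cos t).pow 2).const_mul 4).inv (mul_ne_zero four_ne_zero (pow_ne_zero 2 ht))
    simp only [one_div]
    refine this.congr_deriv ?_
    simp
    field_simp
    ring
  have hS : DifferentiableAt ℝ (fun x => Real.sin x * (2 * Real.cos x) ^ n) t := by fun_prop
  have h1 := (((Fpol n).hasDerivAt _).comp t hh).mul hS.hasDerivAt
  have h2 : HasDerivAt (fun x => Real.sin (((n : ℝ) + 1) * x))
      (Real.cos (((n : ℝ) + 1) * t) * ((n + 1) * 1)) t :=
    ((hasDerivAt_id t).const_mul ((n : ℝ) + 1)).sin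
  have hev : (fun x => Real.sin (((n : ℝ) + 1) * x)) =ᶠ[𝓝 t]
      (((fun x => (Fpol n).eval x) ∘ fun x => 1 / (4 * Real.cos x ^ 2)) *
        fun x => Real.sin x * (2 * Real.cos x) ^ n) := by
    filter_upwards [Real.continuous_cos.continuousAt.eventually_ne ht] with x hx
    simp only [Pi.mul_apply, Function.comp]
    exact (Fpol_trig n x hx).symm
  have h3 := (h1.congr_of_eventuallyEq hev).unique h2
  simp only [Function.comp, h0, zero_mul, add_zero] at h3
  rw [h3]; ring

/-- Partial fractions, polynomial form. -/
lemma partial_fractions {d : ℕ} (F : ℝ[X]) (hd : F.natDegree ≤ d) (s : Finset ℕ) (hs : s.card = d)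
    (hd0 : 1 ≤ d) (a : ℕ → ℝ) (ha : Set.InjOn a s) (hr : ∀ k ∈ s, F.eval (a k) = 0)
    (hF' : ∀ k ∈ s, F.derivative.eval (a k) ≠ 0) (z : ℂ) (hz : ∀ k ∈ s, z ≠ a k)
    (hFz : aeval z F ≠ 0) :
    1 / aeval z F = ∑ k ∈ s, ((1 / F.derivative.eval (a k) : ℝ) : ℂ) / (z - a k) := by
  set Q : ℕ → ℝ[X] := fun k => F /ₘ (X - C (a k)) with hQ
  have hFQ : ∀ k ∈ s, (X - C (a k)) * Q k = F := fun k hk =>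
    mul_divByMonic_eq_iff_isRoot.2 (hr k hk)
  have hQd : ∀ k ∈ s, (Q k).natDegree < d := by
    intro k hk
    simp only [hQ]
    rw [natDegree_divByMonic _ (monic_X_sub_C _), natDegree_X_sub_C]
    omega
  have hQe : ∀ k ∈ s, (Q k).eval (a k) = F.derivative.eval (a k) := by
    intro k hk
    conv_rhs => rw [← hFQ k hk]
    simp
  have hQ0 : ∀ k ∈ s, ∀ j ∈ s, j ≠ k → (Q k).eval (a j) = 0 := by
    intro k hk j hj hjk
    have := hr j hj
    rw [← hFQ k hk, eval_mul] at this
    rcases mul_eq_zero.1 this with h | h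
    · simp [sub_eq_zero] at h
      exact absurd (ha hj hk h) hjk
    · exact h
  have key : ∑ k ∈ s, C (1 / F.derivative.eval (a k)) * Q k = 1 := by
    refine eq_of_degrees_lt_of_eval_index_eq s ha ?_ ?_ ?_
    · rw [hs]
      refine lt_of_le_of_lt (degree_sum_le _ _) ?_
      rw [Finset.sup_lt_iff (by exact WithBot.bot_lt_coe d)]
      intro k hk
      refine lt_of_le_of_lt degree_le_natDegree ?_
      have := natDegree_C_mul_le (1 / F.derivative.eval (a k)) (Q k)
      exact_mod_cast lt_of_le_of_lt this (hQd k hk)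
    · rw [degree_one, hs]; exact_mod_cast hd0
    · intro j hj
      rw [eval_finsetSum, Finset.sum_eq_single j]
      · rw [eval_mul, eval_C, hQe j hj, eval_one, one_div_mul_cancel (hF' j hj)]
      · intro k hk hkj
        rw [eval_mul, hQ0 k hk j hj hkj.symm, mul_zero]
      · exact fun h => absurd hj h
  have key2 := congrArg (aeval z) key
  rw [map_sum, map_one] at key2
  rw [← key2, Finset.sum_div]
  refine Finset.sum_congr rfl fun k hk => ?_
  have h1 : aeval z F = (z - a k) * aeval z (Q k) := by
    conv_lhs => rw [← hFQ k hk]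
    simp
  have h2 : aeval z (Q k) ≠ 0 := fun h => hFz (by rw [h1, h, mul_zero])
  have h3 : z - a k ≠ 0 := sub_ne_zero.2 (hz k hk)
  rw [h1, map_mul, aeval_C]
  simp only [Complex.coe_algebraMap]
  field_simp

lemma Xc_eq (m : ℕ) (z : ℂ) (h : ∀ j ≤ m, aeval z (Fpol j) ≠ 0) (k : ℕ) (hk : k + 1 ≤ m) :
    Xc (k + 1) z = z * aeval z (Fpol k) / aeval z (Fpol (k + 1)) := by
  induction k with
  | zero => simp [Xc, Fpol]
  | succ k ih =>
    have h1 := h (k + 1) (by omega)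
    have h2 := h (k + 2) (by omega)
    have e : aeval z (Fpol (k + 2)) = aeval z (Fpol (k + 1)) - z * aeval z (Fpol k) := by
      simp [Fpol]
    rw [Xc, ih (by omega), one_sub_div h1, ← e, div_div_eq_mul_div]

lemma Yc_eq (m : ℕ) (z : ℂ) (h : ∀ j ≤ m, aeval z (Fpol j) ≠ 0) (k : ℕ) (hk : k ≤ m) :
    Yc k z = z ^ k / aeval z (Fpol k) := by
  induction k with
  | zero => simp [Yc, Fpol]
  | succ k ih =>
    have h1 := h k (by omega)
    have h2 := h (k + 1) (by omega)
    have ih' := ih (by omega)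
    unfold Yc at ih' ⊢
    rw [Finset.prod_Icc_succ_top (by omega), ih', Xc_eq m z h k hk]
    field_simp
    ring

lemma Yc_eventually (m : ℕ) : ∀ᶠ z : ℂ in 𝓝 0,
    aeval z (Fpol m) ≠ 0 ∧ Yc m z = z ^ m / aeval z (Fpol m) := by
  have : ∀ᶠ z : ℂ in 𝓝 0, ∀ j ∈ Finset.range (m + 1), aeval z (Fpol j) ≠ 0 := by
    rw [Filter.eventually_all_finset]
    intro j _
    have hc : Continuous fun z : ℂ => aeval z (Fpol j) := (Fpol j).continuous_aeval
    refine hc.continuousAt.eventually_ne ?_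
    have := aeval_algebraMap_apply_eq_algebraMap_eval (A := ℂ) (0 : ℝ) (Fpol j)
    rw [Fpol_zero] at this
    simp only [map_zero, map_one] at this
    rw [this]
    exact one_ne_zero
  filter_upwards [this] with z hz
  have hz' : ∀ j ≤ m, aeval z (Fpol j) ≠ 0 := fun j hj => hz j (by simp; omega)
  exact ⟨hz' m le_rfl, Yc_eq m z hz' m le_rfl⟩

lemma coef_of_partial (f : ℂ → ℂ) (m N : ℕ) (hN : m ≤ N) (s : Finset ℕ) (a w : ℕ → ℂ)
    (ha : ∀ k ∈ s, a k ≠ 0)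
    (hf : ∀ᶠ z in 𝓝 0, f z = ∑ k ∈ s, z ^ m * (w k / (z - a k))) :
    iteratedDeriv N f 0 / (N.factorial : ℂ) = ∑ k ∈ s, -(w k / a k ^ (N - m + 1)) := by
  set c : ℕ → ℂ := fun n => if n < m then 0 else ∑ k ∈ s, -(w k / a k ^ (n - m + 1)) with hc
  have hp : HasFPowerSeriesAt f (FormalMultilinearSeries.ofScalars ℂ c) 0 := by
    rw [hasFPowerSeriesAt_iff]
    have hb : ∀ᶠ z : ℂ in 𝓝 0, ∀ k ∈ s, ‖z / a k‖ < 1 := by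
      rw [Filter.eventually_all_finset]
      intro k hk
      have : Continuous fun z : ℂ => ‖z / a k‖ := by fun_prop
      refine this.continuousAt.eventually_lt continuousAt_const ?_
      simp
    filter_upwards [hf, hb] with z hz hzb
    simp only [FormalMultilinearSeries.coeff_ofScalars, smul_eq_mul, zero_add]
    rw [← hasSum_nat_add_iff' m]
    have e0 : ∑ i ∈ Finset.range m, z ^ i * c i = 0 := by
      refine Finset.sum_eq_zero fun i hi => ?_
      simp only [hc, if_pos (Finset.mem_range.1 hi), mul_zero]
    rw [e0, sub_zero, hz]
    have e1 : (fun n => z ^ (n + m) * c (n + m)) =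
        fun n => ∑ k ∈ s, (-(z ^ m * w k / a k)) * (z / a k) ^ n := by
      funext n
      simp only [hc]
      rw [if_neg (by omega), Finset.mul_sum]
      refine Finset.sum_congr rfl fun k hk => ?_
      have := ha k hk
      rw [Nat.add_sub_cancel, div_pow]
      field_simp
      ring
    rw [e1]
    refine hasSum_sum fun k hk => ?_
    have h := (hasSum_geometric_of_norm_lt_one (hzb k hk)).mul_left (-(z ^ m * w k / a k))
    suffices hh : z ^ m * (w k / (z - a k)) = -(z ^ m * w k / a k) * (1 - z / a k)⁻¹ by
      rw [hh]; exact h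
    have h1 := ha k hk
    have h2 : z ≠ a k := by
      rintro rfl
      have := hzb k hk
      rw [div_self h1] at this
      simp at this
    have h3 : z - a k ≠ 0 := sub_ne_zero.2 h2
    have h4 : a k - z ≠ 0 := sub_ne_zero.2 h2.symm
    rw [one_sub_div h1]
    field_simp
    ring
  have h2 := hp.analyticAt.hasFPowerSeriesAt
  have h3 := congrArg (fun p => FormalMultilinearSeries.coeff p N)
    (h2.eq_formalMultilinearSeries hp)
  simp only [FormalMultilinearSeries.coeff_ofScalars] at h3
  rw [h3]
  simp only [hc]
  rw [if_neg (by omega)]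

lemma final_term (m N k : ℕ) (hN : m ≤ N) (t D : ℝ) (hc : 0 < Real.cos t) (hs : 0 < Real.sin t)
    (hD : D * (Real.sin t / (2 * Real.cos t ^ 3)) * (Real.sin t * (2 * Real.cos t) ^ m)
      = (m + 1) * (-1) ^ k) :
    -(1 / D / (1 / (4 * Real.cos t ^ 2)) ^ (N - m + 1)) =
      2 ^ (-((m : ℝ) - 1)) / (m + 1) * ((-1 : ℝ) ^ (k + 1) * Real.tan t ^ 2 *
            (1 + Real.tan t ^ 2) ^ (-(N : ℝ) + ((m : ℝ) - 1) / 2) * 4 ^ N) := by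
  obtain ⟨n, rfl⟩ := Nat.exists_eq_add_of_le hN
  have hn1 : m + n - m + 1 = n + 1 := by omega
  rw [hn1]
  have e1 : (2 : ℝ) ^ (-((m : ℝ) - 1)) = 2 / 2 ^ m := by
    rw [neg_sub, Real.rpow_sub (by norm_num), Real.rpow_one, Real.rpow_natCast]
  have e2 : 1 + Real.tan t ^ 2 = Real.cos t ^ (-2 : ℝ) := by
    rw [Real.tan_eq_sin_div_cos, Real.rpow_neg hc.le, div_pow]
    norm_cast
    field_simp
    linarith [Real.sin_sq_add_cos_sq t]
  have e3 : (1 + Real.tan t ^ 2) ^ (-((m + n : ℕ) : ℝ) + ((m : ℝ) - 1) / 2)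
      = Real.cos t ^ m * Real.cos t ^ (2 * n) * Real.cos t := by
    rw [e2, ← Real.rpow_mul hc.le, ← pow_add, ← pow_succ, ← Real.rpow_natCast]
    congr 1
    push_cast
    ring
  rw [e1, e3, Real.tan_eq_sin_div_cos]
  have hm : (m : ℝ) + 1 ≠ 0 := by positivity
  have hk : ((-1 : ℝ) ^ k) * (-1) ^ k = 1 := by rw [← mul_pow]; norm_num
  have hDe : D = (m + 1) * (-1) ^ k * (2 * Real.cos t ^ 3) / (Real.sin t ^ 2 * (2 * Real.cos t) ^ m) := by
    rw [← hD]
    field_simp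
  have hDi : 1 / D = (-1) ^ k * (Real.sin t ^ 2 * (2 * Real.cos t) ^ m) / ((m + 1) * (2 * Real.cos t ^ 3)) := by
    have hk0 : ((-1 : ℝ) ^ k) ≠ 0 := by positivity
    rw [hDe, one_div_div, div_eq_div_iff (by positivity) (by positivity)]
    linear_combination (-(Real.sin t ^ 2 * (2 * Real.cos t) ^ m) * ((m + 1) * (2 * Real.cos t ^ 3))) * hk
  rw [hDi, pow_succ (-1 : ℝ) k]
  have e4 : (4 : ℝ) ^ (m + n) = 2 ^ m * 2 ^ m * 4 ^ n := by
    rw [pow_add, ← mul_pow]; norm_num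
  rw [e4, mul_pow 2, one_div, inv_pow, mul_pow 4, pow_succ 4 n, ← pow_mul, mul_add, pow_add]
  field_simp
  try ring

/-- For all `N ≥ m ≥ 2`,
`B_{m,N} = (2^{−(m−1)}/(m+1)) · Σ_{k=1}^{⌊m/2⌋} (−1)^{k+1} tan²(πk/(m+1))
  · (1 + tan²(πk/(m+1)))^{−N+(m−1)/2} · 4^N`. -/
theorem Bcoef_formula (m N : ℕ) (hm : 2 ≤ m) (hN : m ≤ N) :
    Bcoef m N =
      ((2 ^ (-((m : ℝ) - 1)) / (m + 1) *
        ∑ k ∈ Finset.Icc 1 (m / 2),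
          (-1 : ℝ) ^ (k + 1) * Real.tan (Real.pi * k / (m + 1)) ^ 2 *
            (1 + Real.tan (Real.pi * k / (m + 1)) ^ 2) ^ (-(N : ℝ) + ((m : ℝ) - 1) / 2) *
            4 ^ N : ℝ) : ℂ) := by
  set s := Finset.Icc 1 (m / 2) with hs
  set t : ℕ → ℝ := fun k => Real.pi * k / (m + 1) with ht
  set a : ℕ → ℝ := fun k => 1 / (4 * Real.cos (t k) ^ 2) with ha
  have hm1 : (0 : ℝ) < m + 1 := by positivity
  have ht0 : ∀ k ∈ s, 0 < t k := by
    intro k hk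
    have : (0 : ℝ) < k := by exact_mod_cast (Finset.mem_Icc.1 hk).1
    have := Real.pi_pos
    simp only [ht]; positivity
  have ht1 : ∀ k ∈ s, t k < Real.pi / 2 := by
    intro k hk
    have h1 : 2 * k < m + 1 := by have := (Finset.mem_Icc.1 hk).2; omega
    have h2 : (2 : ℝ) * k < m + 1 := by exact_mod_cast h1
    simp only [ht]
    rw [div_lt_div_iff₀ hm1 two_pos]
    nlinarith [Real.pi_pos]
  have hcos : ∀ k ∈ s, 0 < Real.cos (t k) := fun k hk =>
    Real.cos_pos_of_mem_Ioo ⟨by linarith [ht0 k hk, Real.pi_pos], ht1 k hk⟩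
  have hsin : ∀ k ∈ s, 0 < Real.sin (t k) := fun k hk =>
    Real.sin_pos_of_pos_of_lt_pi (ht0 k hk) (by linarith [ht1 k hk, Real.pi_pos])
  have hmt : ∀ k, ((m : ℝ) + 1) * t k = k * Real.pi := by
    intro k; simp only [ht]; field_simp
  have hroot : ∀ k ∈ s, (Fpol m).eval (a k) = 0 := by
    intro k hk
    have h := Fpol_trig m (t k) (hcos k hk).ne'
    rw [hmt, Real.sin_nat_mul_pi] at h
    have h1 := hsin k hk
    have h2 := hcos k hk
    exact (mul_eq_zero.1 h).resolve_right (by positivity)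
  have hder : ∀ k ∈ s, (Fpol m).derivative.eval (a k) *
      (Real.sin (t k) / (2 * Real.cos (t k) ^ 3)) * (Real.sin (t k) * (2 * Real.cos (t k)) ^ m)
      = (m + 1) * (-1) ^ k := by
    intro k hk
    have h := Fpol_deriv m (t k) (hcos k hk).ne' (hroot k hk)
    rwa [hmt, Real.cos_nat_mul_pi] at h
  have hder0 : ∀ k ∈ s, (Fpol m).derivative.eval (a k) ≠ 0 := by
    intro k hk h0
    have h := hder k hk
    rw [h0, zero_mul, zero_mul] at h
    have : ((m : ℝ) + 1) * (-1) ^ k ≠ 0 := mul_ne_zero hm1.ne' (by positivity)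
    exact this h.symm
  have hapos : ∀ k ∈ s, 0 < a k := by
    intro k hk
    have := hcos k hk
    simp only [ha]; positivity
  have hinj : Set.InjOn a s := by
    intro j hj k hk hjk
    have h1 := hcos j hj
    have h2 := hcos k hk
    simp only [ha, one_div, inv_inj] at hjk
    have h3 : Real.cos (t j) = Real.cos (t k) := by
      have : Real.cos (t j) ^ 2 = Real.cos (t k) ^ 2 := by linarith
      exact (pow_left_inj₀ h1.le h2.le two_ne_zero).1 this
    have h4 := Real.injOn_cos ⟨(ht0 j hj).le, by linarith [ht1 j hj, Real.pi_pos]⟩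
      ⟨(ht0 k hk).le, by linarith [ht1 k hk, Real.pi_pos]⟩ h3
    have h5 := hmt j
    rw [h4, hmt k] at h5
    exact_mod_cast (mul_right_cancel₀ Real.pi_ne_zero h5).symm
  have hf : ∀ᶠ z : ℂ in 𝓝 0, Yc m z = ∑ k ∈ s, z ^ m *
      (((1 / (Fpol m).derivative.eval (a k) : ℝ) : ℂ) / (z - (a k : ℂ))) := by
    have hne : ∀ᶠ z : ℂ in 𝓝 0, ∀ k ∈ s, z ≠ (a k : ℂ) := by
      rw [Filter.eventually_all_finset]
      intro k hk
      refine continuousAt_id.eventually_ne ?_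
      simp only [id]
      exact_mod_cast (hapos k hk).ne
    filter_upwards [Yc_eventually m, hne] with z ⟨hz1, hz2⟩ hz3
    rw [hz2, ← Finset.mul_sum, ← partial_fractions (d := m / 2) (Fpol m) (Fpol_natDegree m) s
      (by simp [hs]) (by omega) a hinj hroot hder0 z hz3 hz1]
    ring
  unfold Bcoef
  rw [coef_of_partial (Yc m) m N hN s (fun k => (a k : ℂ)) _
    (fun k hk => by exact_mod_cast (hapos k hk).ne') hf, Finset.mul_sum, Complex.ofReal_sum]
  refine Finset.sum_congr rfl fun k hk => ?_
  have h := final_term m N k hN (t k) _ (hcos k hk) (hsin k hk) (hder k hk)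
  rw [← h]
  have hak : 1 / (4 * Real.cos (t k) ^ 2) = a k := rfl
  rw [hak]
  push_cast
  rfl
end

section
/- Let W_N = Σ_{m=1}^N 2^m B_{m,N} for N ≥ 1. Then W_N · 2N / 4^N → 1 as N → ∞; that is, W_N = (1/(2N)) · 4^N · (1 + o(1)). -/
open scoped Real BigOperators Topology

/-- The partition function at the critical coupling `μ₀ = −ln 2`:
`W_N = Σ_{m=1}^N 2^m B_{m,N}`. -/
noncomputable def Wcrit (N : ℕ) : ℂ :=
  ∑ m ∈ Finset.Icc 1 N, (2 : ℂ) ^ m * Bcoef m N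


/-- the angle `π k / M` -/
noncomputable def th (M k : ℕ) : ℝ := π * k / M

/-- discrete-sine walk counts -/
noncomputable def cc (M a l : ℕ) : ℝ :=
  (1 / (M : ℝ)) * ∑ k ∈ Finset.range (2 * M),
    Real.sin (th M k) * Real.sin (a * th M k) * (2 * Real.cos (th M k)) ^ l

lemma sum_cos_th (M : ℕ) (hM : 0 < M) (b : ℕ) (hb : b < 2 * M) :
    ∑ k ∈ Finset.range (2 * M), Real.cos (b * th M k) = if b = 0 then 2 * (M : ℝ) else 0 := by
  have hMR : (M : ℝ) ≠ 0 := by positivity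
  have hMC : (M : ℂ) ≠ 0 := by exact_mod_cast hM.ne'
  split_ifs with h
  · subst h; simp
  · set ζ : ℂ := Complex.exp (2 * π * Complex.I / ((2 * M : ℕ) : ℂ)) with hζ
    have hp : IsPrimitiveRoot ζ (2 * M) := Complex.isPrimitiveRoot_exp _ (by omega)
    have h1 : ζ ^ b ≠ 1 := hp.pow_ne_one_of_pos_of_lt h hb
    have h2 : ∑ k ∈ Finset.range (2 * M), (ζ ^ b) ^ k = 0 := by
      have := mul_neg_geom_sum (ζ ^ b) (2 * M)
      rw [← pow_mul, mul_comm b, pow_mul, hp.pow_eq_one, one_pow, sub_self] at this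
      rcases mul_eq_zero.mp this with h3 | h3
      · exact absurd (sub_eq_zero.mp h3).symm h1
      · exact h3
    have h3 : ∀ k : ℕ, Real.cos (b * th M k) = ((ζ ^ b) ^ k).re := by
      intro k
      rw [hζ, ← Complex.exp_nat_mul, ← Complex.exp_nat_mul, ← Complex.exp_ofReal_mul_I_re]
      congr 2
      simp only [th]
      push_cast
      field_simp
    simp_rw [h3]
    rw [← Complex.re_sum, h2]; rfl

lemma cc_init (M a : ℕ) (hM : 2 ≤ M) (ha : 1 ≤ a) (h : a + 1 < 2 * M) :
    cc M a 0 = if a = 1 then 1 else 0 := by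
  obtain ⟨b, rfl⟩ : ∃ b, a = b + 1 := ⟨a - 1, by omega⟩
  have hMR : (M : ℝ) ≠ 0 := by positivity
  have key : ∀ k : ℕ, Real.sin (th M k) * Real.sin ((b + 1 : ℕ) * th M k) * (2 * Real.cos (th M k)) ^ 0
      = (Real.cos (b * th M k) - Real.cos ((b + 2 : ℕ) * th M k)) / 2 := by
    intro k
    have e1 : (b : ℝ) * th M k = (b + 1 : ℕ) * th M k - th M k := by push_cast; ring
    have e2 : ((b + 2 : ℕ) : ℝ) * th M k = (b + 1 : ℕ) * th M k + th M k := by push_cast; ring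
    rw [e1, e2, Real.cos_sub, Real.cos_add]; ring
  unfold cc
  simp_rw [key]
  rw [← Finset.sum_div, Finset.sum_sub_distrib, sum_cos_th M (by omega) b (by omega),
    sum_cos_th M (by omega) (b + 2) (by omega)]
  by_cases hb : b = 0
  · subst hb; simp; field_simp
  · simp [hb]

lemma cc_succ (M a l : ℕ) : cc M (a + 1) (l + 1) = cc M a l + cc M (a + 2) l := by
  unfold cc
  rw [← mul_add, ← Finset.sum_add_distrib]
  congr 1
  apply Finset.sum_congr rfl
  intro k _
  have e1 : (a : ℝ) * th M k = (a + 1 : ℕ) * th M k - th M k := by push_cast; ring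
  have e2 : ((a + 2 : ℕ) : ℝ) * th M k = (a + 1 : ℕ) * th M k + th M k := by push_cast; ring
  rw [e1, e2, Real.sin_sub, Real.sin_add]; ring

lemma cc_vanish (M : ℕ) (hM : 2 ≤ M) (l : ℕ) :
    ∀ a, l + 1 < a → a + l + 1 < 2 * M → cc M a l = 0 := by
  induction l with
  | zero => intro a h1 h2; rw [cc_init M a hM (by omega) (by omega), if_neg (by omega)]
  | succ l ih =>
    intro a h1 h2
    obtain ⟨b, rfl⟩ : ∃ b, a = b + 1 := ⟨a - 1, by omega⟩
    rw [cc_succ, ih b (by omega) (by omega), ih (b + 2) (by omega) (by omega), add_zero]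

/-- the resolvent entries; index shifted: `Qf M a` is `Q_{a+1}` -/
noncomputable def Qf (M a : ℕ) (g : ℂ) : ℂ :=
  (1 / (M : ℂ)) * ∑ k ∈ Finset.range (2 * M),
    ((Real.sin (th M k) * Real.sin ((a + 1 : ℕ) * th M k) * (2 * Real.cos (th M k)) ^ a : ℝ) : ℂ)
      / (1 - (((2 * Real.cos (th M k)) ^ 2 : ℝ) : ℂ) * g)

lemma den_ne (x : ℝ) (g : ℂ) (hg : ‖g‖ < 1 / 4) :
    (1 - (((2 * Real.cos x) ^ 2 : ℝ) : ℂ) * g) ≠ 0 := by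
  intro h
  have h1 : (((2 * Real.cos x) ^ 2 : ℝ) : ℂ) * g = 1 := (sub_eq_zero.mp h).symm
  have h2 : ‖(((2 * Real.cos x) ^ 2 : ℝ) : ℂ) * g‖ = 1 := by rw [h1]; simp
  rw [norm_mul, Complex.norm_real, Real.norm_of_nonneg (sq_nonneg _)] at h2
  have := Real.cos_sq_le_one x
  nlinarith [norm_nonneg g]

lemma Qf_rec (M a : ℕ) (hM : 2 ≤ M) (ha : a + 2 < M) (g : ℂ) (hg : ‖g‖ < 1 / 4) :
    Qf M a g = Qf M (a + 1) g - g * Qf M (a + 2) g := by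
  have hv := cc_vanish M hM a (a + 3) (by omega) (by omega)
  have hv' : ((cc M (a + 3) a : ℝ) : ℂ) = 0 := by rw [hv]; simp
  have : Qf M a g - (Qf M (a + 1) g - g * Qf M (a + 2) g) = -((cc M (a + 3) a : ℝ) : ℂ) := by
    unfold Qf cc
    push_cast
    rw [← mul_left_comm, ← mul_sub, ← mul_sub, Finset.mul_sum, ← Finset.sum_sub_distrib,
      ← Finset.sum_sub_distrib, ← mul_neg, ← Finset.sum_neg_distrib]
    congr 1
    apply Finset.sum_congr rfl
    intro k _
    have hd := den_ne (th M k) g hg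
    push_cast at hd
    set t : ℂ := ((th M k : ℝ) : ℂ)
    have e1 : ((a : ℂ) + 1) * t = (a + 2) * t - t := by ring
    have e2 : ((a : ℂ) + 1 + 1) * t = (a + 2) * t := by ring
    have e3 : ((a : ℂ) + 2 + 1) * t = (a + 2) * t + t := by ring
    have e4 : ((a : ℂ) + 3) * t = (a + 2) * t + t := by ring
    rw [e1, e2, e3, e4, Complex.sin_sub, Complex.sin_add, mul_div_assoc', div_sub_div_same,
      div_sub_div_same, div_eq_iff hd]
    ring
  rw [hv', neg_zero] at this
  exact sub_eq_zero.mp this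

lemma Qf_one (M : ℕ) (hM : 2 ≤ M) (g : ℂ) (hg : ‖g‖ < 1 / 4) :
    Qf M 0 g - g * Qf M 1 g = 1 := by
  have hv := cc_init M 1 hM le_rfl (by omega)
  have hv' : ((cc M 1 0 : ℝ) : ℂ) = 1 := by rw [hv]; simp
  rw [← hv']
  unfold Qf cc
  push_cast
  rw [← mul_left_comm, ← mul_sub, Finset.mul_sum, ← Finset.sum_sub_distrib]
  congr 1
  apply Finset.sum_congr rfl
  intro k _
  have hd := den_ne (th M k) g hg
  push_cast at hd
  set t : ℂ := ((th M k : ℝ) : ℂ)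
  rw [one_mul, Complex.sin_two_mul, mul_div_assoc', div_sub_div_same, div_eq_iff hd]
  ring

lemma Qf_end (m : ℕ) (g : ℂ) : Qf (m + 1) m g = 0 := by
  unfold Qf
  have : ∀ k : ℕ, Real.sin ((m + 1 : ℕ) * th (m + 1) k) = 0 := by
    intro k
    have : ((m + 1 : ℕ) : ℝ) * th (m + 1) k = k * π := by
      unfold th
      have : ((m + 1 : ℕ) : ℝ) ≠ 0 := by positivity
      field_simp
    rw [this, Real.sin_nat_mul_pi]
  simp only [this]
  simp

/-- continuant polynomials -/
noncomputable def Dp : ℕ → ℂ → ℂ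
  | 0, _ => 0
  | 1, _ => 1
  | (n + 2), g => Dp (n + 1) g - g * Dp n g

lemma Qf_Dp (m : ℕ) (g : ℂ) (hg : ‖g‖ < 1 / 4) (hm : 1 ≤ m) (j : ℕ) :
    ∀ a, a + j = m → Qf (m + 1) a g = Dp j g * Qf (m + 1) (m - 1) g := by
  induction j using Nat.twoStepInduction with
  | zero => intro a h; obtain rfl : a = m := by omega
            simp [Qf_end, Dp]
  | one => intro a h; obtain rfl : a = m - 1 := by omega
           simp [Dp]
  | more j h1 h2 =>
    intro a h
    rw [Qf_rec (m + 1) a (by omega) (by omega) g hg, h2 (a + 1) (by omega), h1 (a + 2) (by omega)]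
    simp only [Dp]; ring

lemma Dp_mul (m : ℕ) (g : ℂ) (hg : ‖g‖ < 1 / 4) (hm : 1 ≤ m) :
    Dp (m + 1) g * Qf (m + 1) (m - 1) g = 1 := by
  obtain ⟨n, rfl⟩ : ∃ n, m = n + 1 := ⟨m - 1, by omega⟩
  have h := Qf_one (n + 1 + 1) (by omega) g hg
  rw [Qf_Dp (n + 1) g hg hm (n + 1) 0 (by omega), Qf_Dp (n + 1) g hg hm n 1 (by omega)] at h
  rw [← h]; simp only [Dp]; ring

lemma Dp_ne (m : ℕ) (g : ℂ) (hg : ‖g‖ < 1 / 4) : Dp (m + 1) g ≠ 0 := by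
  rcases Nat.eq_zero_or_pos m with rfl | hm
  · simp [Dp]
  · exact left_ne_zero_of_mul_eq_one (Dp_mul m g hg hm)

lemma Xc_eq_s10 (m : ℕ) (g : ℂ) (hg : ‖g‖ < 1 / 4) : Xc m g = g * Dp m g / Dp (m + 1) g := by
  induction m with
  | zero => simp [Xc, Dp]
  | succ m ih =>
    have h1 := Dp_ne m g hg
    have h2 := Dp_ne (m + 1) g hg
    simp only [Xc]
    rw [ih]
    have h3 : 1 - g * Dp m g / Dp (m + 1) g = Dp (m + 1 + 1) g / Dp (m + 1) g := by
      rw [eq_div_iff h1, sub_mul, div_mul_cancel₀ _ h1]; simp only [Dp]; ring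
    rw [h3, div_div_eq_mul_div]

lemma Yc_eq' (m : ℕ) (g : ℂ) (hg : ‖g‖ < 1 / 4) : Yc m g = g ^ m / Dp (m + 1) g := by
  unfold Yc
  induction m with
  | zero => simp [Dp]
  | succ m ih =>
    rw [Finset.prod_Icc_succ_top (by omega), ih, Xc_eq_s10 _ g hg]
    have h1 := Dp_ne m g hg
    have h2 := Dp_ne (m + 1) g hg
    field_simp
    ring

lemma Yc_eq_s10 (m : ℕ) (hm : 1 ≤ m) (g : ℂ) (hg : ‖g‖ < 1 / 4) :
    Yc m g = g ^ m * Qf (m + 1) (m - 1) g := by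
  rw [Yc_eq' m g hg, div_eq_iff (Dp_ne m g hg), mul_assoc, mul_comm (Qf _ _ _), Dp_mul m g hg hm,
    mul_one]

lemma Yc_hasSum (m : ℕ) (hm : 1 ≤ m) (g : ℂ) (hg : ‖g‖ < 1 / 4) :
    HasSum (fun N : ℕ => g ^ N * (if N < m then 0 else ((cc (m + 1) m (2 * N - (m + 1)) : ℝ) : ℂ)))
      (Yc m g) := by
  rw [← hasSum_nat_add_iff' m, Finset.sum_eq_zero, sub_zero, Yc_eq_s10 m hm g hg]
  swap
  · intro i hi; rw [if_pos (Finset.mem_range.mp hi), mul_zero]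
  obtain ⟨n, rfl⟩ : ∃ n, m = n + 1 := ⟨m - 1, by omega⟩
  have h1 : ∀ k : ℕ, HasSum (fun j : ℕ => ((((2 * Real.cos (th (n + 2) k)) ^ 2 : ℝ) : ℂ) * g) ^ j)
      (1 - (((2 * Real.cos (th (n + 2) k)) ^ 2 : ℝ) : ℂ) * g)⁻¹ := by
    intro k
    apply hasSum_geometric_of_norm_lt_one
    rw [norm_mul, Complex.norm_real, Real.norm_of_nonneg (sq_nonneg _)]
    have := Real.cos_sq_le_one (th (n + 2) k)
    nlinarith [norm_nonneg g]
  have h2 := hasSum_sum (s := Finset.range (2 * (n + 2))) (fun k _ => (h1 k).mul_left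
    ((Real.sin (th (n + 2) k) * Real.sin ((n + 1 : ℕ) * th (n + 2) k) *
      (2 * Real.cos (th (n + 2) k)) ^ n : ℝ) : ℂ))
  have h3 := h2.mul_left (g ^ (n + 1) * (1 / ((n + 2 : ℕ) : ℂ)))
  rw [mul_assoc] at h3
  change HasSum _ (g ^ (n + 1) * Qf (n + 2) n g) at h3
  refine Eq.subst (motive := fun F => HasSum F (g ^ (n + 1) * Qf (n + 2) n g)) (funext fun j => ?_) h3
  symm
  rw [if_neg (by omega), show 2 * (j + (n + 1)) - (n + 1 + 1) = n + 2 * j by omega]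
  unfold cc
  push_cast
  rw [Finset.mul_sum, Finset.mul_sum, Finset.mul_sum]
  apply Finset.sum_congr rfl
  intro k _
  have h24 : (2 : ℂ) ^ (j * 2) = 4 ^ j := by rw [mul_comm, pow_mul]; norm_num
  ring_nf
  rw [h24]
  ring

lemma Bcoef_eq (m N : ℕ) (hm : 1 ≤ m) (hN : m ≤ N) :
    Bcoef m N = ((cc (m + 1) m (2 * N - (m + 1)) : ℝ) : ℂ) := by
  set b : ℕ → ℂ := fun N => if N < m then 0 else ((cc (m + 1) m (2 * N - (m + 1)) : ℝ) : ℂ) with hb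
  have h1 : HasFPowerSeriesAt (Yc m) (FormalMultilinearSeries.ofScalars ℂ b) 0 := by
    rw [hasFPowerSeriesAt_iff]
    filter_upwards [Metric.ball_mem_nhds (0 : ℂ) (show (0 : ℝ) < 1 / 4 by norm_num)] with z hz
    rw [mem_ball_zero_iff] at hz
    rw [zero_add]
    simp only [FormalMultilinearSeries.coeff_ofScalars, smul_eq_mul]
    exact Yc_hasSum m hm z hz
  have h2 := h1.analyticAt.hasFPowerSeriesAt
  have h3 := h1.eq_formalMultilinearSeries h2
  have h4 := congrArg (fun p => FormalMultilinearSeries.coeff p N) h3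
  simp only [FormalMultilinearSeries.coeff_ofScalars] at h4
  unfold Bcoef
  rw [← h4, hb]
  simp only
  rw [if_neg (by omega)]

/-- the real summand -/
noncomputable def Af (N M : ℕ) : ℝ :=
  (N : ℝ) / M * ∑ k ∈ Finset.range (2 * M),
    (-1) ^ (k + 1) * (Real.sin (th M k) ^ 2 * Real.cos (th M k) ^ (2 * N - M))

lemma term_eq (N m : ℕ) (hm : 1 ≤ m) (hN : m ≤ N) :
    (2 : ℝ) ^ m * cc (m + 1) m (2 * N - (m + 1)) * (2 * N) / 4 ^ N = Af N (m + 1) := by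
  unfold Af cc
  have hk : ∀ k : ℕ, Real.sin (m * th (m + 1) k) = (-1) ^ (k + 1) * Real.sin (th (m + 1) k) := by
    intro k
    have : (m : ℝ) * th (m + 1) k = k * π - th (m + 1) k := by
      unfold th
      have : ((m + 1 : ℕ) : ℝ) ≠ 0 := by positivity
      field_simp
      push_cast; ring
    rw [this, Real.sin_sub, Real.sin_nat_mul_pi, Real.cos_nat_mul_pi]; ring
  obtain ⟨d, hd⟩ : ∃ d, 2 * N = m + 1 + d := ⟨2 * N - (m + 1), by omega⟩
  have h4 : (4 : ℝ) ^ N = 2 ^ m * 2 * 2 ^ d := by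
    rw [show (4 : ℝ) = 2 ^ 2 by norm_num, ← pow_mul, hd]; ring
  rw [hd, Nat.add_sub_cancel_left, h4]
  rw [Finset.mul_sum, Finset.mul_sum, Finset.mul_sum, Finset.sum_mul, Finset.sum_div]
  apply Finset.sum_congr rfl
  intro k _
  rw [hk, mul_pow]
  have : ((m + 1 : ℕ) : ℝ) ≠ 0 := by positivity
  field_simp

lemma Wcrit_eq (N : ℕ) :
    Wcrit N * (2 * (N : ℂ)) / 4 ^ N = ((∑ M ∈ Finset.Icc 2 (N + 1), Af N M : ℝ) : ℂ) := by
  have : ∑ M ∈ Finset.Icc 2 (N + 1), Af N M = ∑ m ∈ Finset.Icc 1 N, Af N (m + 1) := by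
    rw [← Finset.map_add_right_Icc 1 N 1, Finset.sum_map]; rfl
  rw [this]
  unfold Wcrit
  rw [Finset.sum_mul, Finset.sum_div, Complex.ofReal_sum]
  apply Finset.sum_congr rfl
  intro m hm
  rw [Finset.mem_Icc] at hm
  rw [Bcoef_eq m N hm.1 hm.2, ← term_eq N m hm.1 hm.2]
  push_cast
  rfl

/-- folded terms -/
noncomputable def Tf (N M k : ℕ) : ℝ :=
  if 2 * k < M then
    4 * (N : ℝ) / M * ((-1) ^ (k + 1) * (Real.sin (th M k) ^ 2 * Real.cos (th M k) ^ (2 * N - M)))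
  else 0

lemma Af_eq (N M : ℕ) (hM : 2 ≤ M) (hMN : M ≤ N + 1) (hN : 2 ≤ N) :
    Af N M = ∑ k ∈ Finset.range M, Tf N M k := by
  set n := 2 * N - M with hn
  have hMR : (M : ℝ) ≠ 0 := by positivity
  set g : ℕ → ℝ := fun k => (-1) ^ (k + 1) * (Real.sin (th M k) ^ 2 * Real.cos (th M k) ^ n) with hg
  have hnM : (-1 : ℝ) ^ M * (-1) ^ n = 1 := by
    rw [← pow_add, show M + n = 2 * N by omega, pow_mul]; simp
  have h1 : ∀ k, g (M + k) = g k := by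
    intro k
    have : th M (M + k) = th M k + π := by unfold th; push_cast; field_simp; ring
    simp only [hg]
    rw [this, Real.sin_add_pi, Real.cos_add_pi, show M + k + 1 = M + (k + 1) by ring, pow_add _ M,
      neg_pow (Real.cos _)]
    linear_combination ((-1) ^ (k + 1) * Real.sin (th M k) ^ 2 * Real.cos (th M k) ^ n) * hnM
  have h2 : ∀ k, k ≤ M → g (M - k) = g k := by
    intro k hk
    have : th M (M - k) = π - th M k := by unfold th; push_cast [hk]; field_simp
    have hs : (-1 : ℝ) ^ (M - k + 1) = (-1) ^ M * (-1) ^ (k + 1) := by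
      rw [← pow_add, neg_one_pow_eq_pow_mod_two, neg_one_pow_eq_pow_mod_two (n := M + (k + 1))]
      congr 1; omega
    simp only [hg]
    rw [this, Real.sin_pi_sub, Real.cos_pi_sub, neg_pow (Real.cos _), hs]
    linear_combination ((-1) ^ (k + 1) * Real.sin (th M k) ^ 2 * Real.cos (th M k) ^ n) * hnM
  have h3 : ∑ k ∈ Finset.range (2 * M), g k = 2 * ∑ k ∈ Finset.range M, g k := by
    rw [two_mul M, Finset.sum_range_add]
    simp only [h1]; ring
  have h0 : g 0 = 0 := by simp [hg, th]
  have hmid : ∀ k, 2 * k = M → g k = 0 := by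
    intro k hk
    have : th M k = π / 2 := by
      unfold th; rw [← hk]; push_cast
      have : (k : ℝ) ≠ 0 := by intro h; apply hMR; rw [← hk]; push_cast; rw [h]; ring
      field_simp
    simp only [hg]
    rw [this, Real.cos_pi_div_two, zero_pow (by omega)]; simp
  have h4 : ∑ k ∈ Finset.range M, g k = 2 * ∑ k ∈ Finset.range M, if 2 * k < M then g k else 0 := by
    have e1 : ∀ k, g k = (if 2 * k < M then g k else 0) + (if M < 2 * k then g k else 0) := by
      intro k
      rcases lt_trichotomy (2 * k) M with h | h | h
      · rw [if_pos h, if_neg (by omega), add_zero]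
      · rw [if_neg (by omega), if_neg (by omega), hmid k h, add_zero]
      · rw [if_neg (by omega), if_pos h, zero_add]
    rw [Finset.sum_congr rfl (fun k _ => e1 k), Finset.sum_add_distrib, two_mul]
    congr 1
    obtain ⟨m, rfl⟩ : ∃ m, M = m + 1 := ⟨M - 1, by omega⟩
    rw [Finset.sum_range_succ', Finset.sum_range_succ' (fun k => if 2 * k < m + 1 then g k else 0)]
    simp only [h0, ite_self, add_zero]
    rw [← Finset.sum_range_reflect]
    apply Finset.sum_congr rfl
    intro k hk
    rw [Finset.mem_range] at hk
    have := h2 (k + 1) (by omega)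
    rw [show m - 1 - k + 1 = m + 1 - (k + 1) by omega, this]
    congr 1
    apply propext; omega
  have : Af N M = (N : ℝ) / M * ∑ k ∈ Finset.range (2 * M), g k := rfl
  rw [this, h3, h4, Finset.mul_sum, Finset.mul_sum, Finset.mul_sum]
  apply Finset.sum_congr rfl
  intro k _
  unfold Tf
  split_ifs
  · ring
  · ring

lemma exp_neg_le (y : ℝ) (hy : 0 < y) : Real.exp (-y) ≤ 2 / y ^ 2 := by
  rw [Real.exp_neg, inv_eq_one_div, div_le_div_iff₀ (Real.exp_pos _) (by positivity)]
  have := Real.quadratic_le_exp_of_nonneg hy.le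
  nlinarith

lemma Tf_bound (N M k : ℕ) (hM : 2 ≤ M) (hMN : M ≤ N + 1) (hN : 2 ≤ N) :
    |Tf N M k| ≤ 8 * π ^ 2 * ((M : ℝ) / N) * (1 / (k : ℝ) ^ 2) := by
  unfold Tf
  split_ifs with h
  swap
  · rw [abs_zero]; positivity
  rcases Nat.eq_zero_or_pos k with rfl | hk
  · simp [th]
  have hMR : (0 : ℝ) < M := by positivity
  have hNR : (0 : ℝ) < N := by positivity
  have hkR : (0 : ℝ) < k := by positivity
  have hpi := Real.pi_pos
  set θ := th M k with hθ
  have hθ0 : 0 ≤ θ := by rw [hθ]; unfold th; positivity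
  have hθ1 : θ ≤ π / 2 := by
    rw [hθ]; unfold th
    rw [div_le_div_iff₀ hMR two_pos]
    have : (2 * k : ℝ) ≤ M := by exact_mod_cast h.le
    nlinarith
  have hc0 : 0 ≤ Real.cos θ := Real.cos_nonneg_of_mem_Icc ⟨by linarith, hθ1⟩
  have hc1 : Real.cos θ ≤ Real.exp (-(2 * (k : ℝ) ^ 2 / M ^ 2)) := by
    have := Real.cos_le_one_sub_mul_cos_sq (x := θ) (by rw [abs_of_nonneg hθ0]; linarith)
    have e : 2 / π ^ 2 * θ ^ 2 = 2 * (k : ℝ) ^ 2 / M ^ 2 := by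
      rw [hθ]; unfold th; field_simp
    rw [e] at this
    linarith [Real.add_one_le_exp (-(2 * (k : ℝ) ^ 2 / M ^ 2))]
  have hn : (N : ℝ) ≤ 2 * ((2 * N - M : ℕ) : ℝ) := by
    have : N ≤ 2 * (2 * N - M) := by omega
    exact_mod_cast this
  have hc2 : Real.cos θ ^ (2 * N - M) ≤ 2 / ((N : ℝ) * k ^ 2 / M ^ 2) ^ 2 := by
    calc _ ≤ Real.exp (-(2 * (k : ℝ) ^ 2 / M ^ 2)) ^ (2 * N - M) := pow_le_pow_left₀ hc0 hc1 _
      _ = Real.exp (-(((2 * N - M : ℕ) : ℝ) * (2 * (k : ℝ) ^ 2 / M ^ 2))) := by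
        rw [← Real.exp_nat_mul]; congr 1; ring
      _ ≤ Real.exp (-((N : ℝ) * k ^ 2 / M ^ 2)) := by
        apply Real.exp_le_exp.mpr
        rw [neg_le_neg_iff, ← mul_div_assoc]
        apply div_le_div_of_nonneg_right _ (by positivity)
        nlinarith [sq_nonneg (k : ℝ), hn]
      _ ≤ _ := exp_neg_le _ (by positivity)
  have hs : Real.sin θ ^ 2 ≤ (π * k / M) ^ 2 := by
    apply pow_le_pow_left₀ (Real.sin_nonneg_of_mem_Icc ⟨hθ0, by linarith⟩)
    exact Real.sin_le hθ0
  rw [abs_mul, abs_mul, abs_pow, abs_neg, abs_one, one_pow, one_mul, abs_of_nonneg (by positivity),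
    abs_of_nonneg (by positivity)]
  calc 4 * (N : ℝ) / M * (Real.sin θ ^ 2 * Real.cos θ ^ (2 * N - M))
      ≤ 4 * (N : ℝ) / M * ((π * k / M) ^ 2 * (2 / ((N : ℝ) * k ^ 2 / M ^ 2) ^ 2)) := by
        gcongr
    _ = _ := by field_simp; ring

lemma summ2 : Summable (fun k : ℕ => 1 / (k : ℝ) ^ 2) :=
  Real.summable_one_div_nat_pow.mpr one_lt_two

lemma Af_bound1 : ∃ C : ℝ, 0 ≤ C ∧ ∀ N M : ℕ, 2 ≤ M → M ≤ N + 1 → 2 ≤ N →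
    |Af N M| ≤ C * ((M : ℝ) / N) := by
  refine ⟨8 * π ^ 2 * ∑' k : ℕ, 1 / (k : ℝ) ^ 2,
    mul_nonneg (by positivity) (tsum_nonneg fun k => by positivity), ?_⟩
  intro N M hM hMN hN
  rw [Af_eq N M hM hMN hN]
  calc _ ≤ ∑ k ∈ Finset.range M, |Tf N M k| := Finset.abs_sum_le_sum_abs _ _
    _ ≤ ∑ k ∈ Finset.range M, 8 * π ^ 2 * ((M : ℝ) / N) * (1 / (k : ℝ) ^ 2) :=
      Finset.sum_le_sum fun k _ => Tf_bound N M k hM hMN hN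
    _ = 8 * π ^ 2 * ((M : ℝ) / N) * ∑ k ∈ Finset.range M, (1 / (k : ℝ) ^ 2) := by
      rw [Finset.mul_sum]
    _ ≤ 8 * π ^ 2 * ((M : ℝ) / N) * ∑' k : ℕ, 1 / (k : ℝ) ^ 2 := by
      gcongr
      exact summ2.sum_le_tsum _ (fun k _ => by positivity)
    _ = _ := by ring

lemma second_diff (f f' f'' : ℝ → ℝ) (hf : ∀ x, HasDerivAt f (f' x) x)
    (hf' : ∀ x, HasDerivAt f' (f'' x) x) (hc : Continuous f'') (x h : ℝ) (hh : 0 ≤ h) :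
    |f x - 2 * f (x + h) + f (x + 2 * h)| ≤ h * ∫ t in x..(x + 2 * h), |f'' t| := by
  set K := ∫ t in x..(x + 2 * h), |f'' t| with hK
  have hb : ∀ s ∈ Set.Icc 0 h, |f' (x + h + s) - f' (x + s)| ≤ K := by
    intro s hs
    have e : ∫ t in (x + s)..(x + h + s), f'' t = f' (x + h + s) - f' (x + s) :=
      intervalIntegral.integral_eq_sub_of_hasDerivAt (fun t _ => hf' t) (hc.intervalIntegrable _ _)
    rw [← e]
    calc _ ≤ ∫ t in (x + s)..(x + h + s), |f'' t| :=
          intervalIntegral.abs_integral_le_integral_abs (by linarith)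
      _ ≤ K := by
        apply intervalIntegral.integral_mono_interval (by linarith [hs.1]) (by linarith)
          (by linarith [hs.2])
        · exact Filter.Eventually.of_forall fun t => abs_nonneg _
        · exact hc.abs.intervalIntegrable _ _
  have hd : ∀ s ∈ Set.Icc 0 h, HasDerivWithinAt (fun s => f (x + h + s) - f (x + s))
      (f' (x + h + s) - f' (x + s)) (Set.Icc 0 h) s := by
    intro s _
    exact (((hf _).comp_const_add (x + h) s).sub ((hf _).comp_const_add x s)).hasDerivWithinAt
  have := norm_image_sub_le_of_norm_deriv_le_segment' hd
    (fun s hs => hb s ⟨hs.1, hs.2.le⟩) h ⟨hh, le_rfl⟩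
  simp only [Real.norm_eq_abs, add_zero, sub_zero] at this
  rw [mul_comm] at this
  convert this using 2
  rw [show x + h + h = x + 2 * h by ring]; ring

lemma alt_sum (f f' f'' : ℝ → ℝ) (hf : ∀ x, HasDerivAt f (f' x) x)
    (hf' : ∀ x, HasDerivAt f' (f'' x) x) (hc : Continuous f'') (hp : ∀ x, f (x + 2 * π) = f x)
    (hp'' : Function.Periodic (fun x => |f'' x|) (2 * π))
    (M : ℕ) (hM : 0 < M) :
    |∑ k ∈ Finset.range (2 * M), (-1) ^ (k + 1) * f (th M k)| ≤
      π / (2 * M) * ∫ t in (0 : ℝ)..(2 * π), |f'' t| := by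
  have hMR : (0 : ℝ) < M := by positivity
  set h : ℝ := π / M with hh
  have hh0 : 0 ≤ h := by positivity
  have hth : ∀ k, th M k = k * h := by intro k; unfold th; rw [hh]; ring
  set G : ℕ → ℝ := fun k => (-1) ^ (k + 1) * f (th M k) with hG
  have hper : ∀ k, G (2 * M + k) = G k := by
    intro k
    have : th M (2 * M + k) = th M k + 2 * π := by unfold th; push_cast; field_simp; ring
    simp only [hG]
    rw [this, hp, show 2 * M + k + 1 = 2 * M + (k + 1) by ring, pow_add, pow_mul]; simp
  have hshift : ∀ F : ℕ → ℝ, F (2 * M) = F 0 →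
      ∑ k ∈ Finset.range (2 * M), F (k + 1) = ∑ k ∈ Finset.range (2 * M), F k := by
    intro F hF
    have := Finset.sum_range_succ F (2 * M)
    rw [Finset.sum_range_succ'] at this
    linarith
  have s1 := hshift G (by simpa using hper 0)
  have s2 := hshift (fun k => G (k + 1)) (by simpa using hper 1)
  have h4 : 4 * ∑ k ∈ Finset.range (2 * M), G k =
      ∑ k ∈ Finset.range (2 * M), (G k + 2 * G (k + 1) + G (k + 1 + 1)) := by
    rw [Finset.sum_add_distrib, Finset.sum_add_distrib, ← Finset.mul_sum, s2, s1]; ring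
  have hterm : ∀ k, |G k + 2 * G (k + 1) + G (k + 1 + 1)| ≤
      h * ((∫ t in ((k : ℕ) * h)..((k + 1 : ℕ) * h), |f'' t|) +
        ∫ t in ((k + 1 : ℕ) * h)..((k + 1 + 1 : ℕ) * h), |f'' t|) := by
    intro k
    have := second_diff f f' f'' hf hf' hc (k * h) h hh0
    rw [intervalIntegral.integral_add_adjacent_intervals (hc.abs.intervalIntegrable _ _)
      (hc.abs.intervalIntegrable _ _)]
    have e : G k + 2 * G (k + 1) + G (k + 1 + 1) =
        (-1) ^ (k + 1) * (f (k * h) - 2 * f (k * h + h) + f (k * h + 2 * h)) := by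
      simp only [hG, hth]
      push_cast
      rw [show ((k : ℝ) + 1) * h = k * h + h by ring,
        show ((k : ℝ) + 1 + 1) * h = k * h + 2 * h by ring]
      ring
    rw [e, abs_mul, abs_pow, abs_neg, abs_one, one_pow, one_mul]
    convert this using 4
    push_cast; ring
  have hsum1 : ∑ k ∈ Finset.range (2 * M), ∫ t in ((k : ℕ) * h)..((k + 1 : ℕ) * h), |f'' t| =
      ∫ t in (0 : ℝ)..(2 * π), |f'' t| := by
    rw [intervalIntegral.sum_integral_adjacent_intervals (a := fun k : ℕ => (k : ℝ) * h)
      (fun k _ => hc.abs.intervalIntegrable _ _)]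
    congr 1
    · simp
    · push_cast; rw [hh]; field_simp
  have hsum2 : ∑ k ∈ Finset.range (2 * M),
      ∫ t in ((k + 1 : ℕ) * h)..((k + 1 + 1 : ℕ) * h), |f'' t| =
      ∫ t in (0 : ℝ)..(2 * π), |f'' t| := by
    rw [← hsum1]
    apply hshift (fun k => ∫ t in ((k : ℕ) * h)..((k + 1 : ℕ) * h), |f'' t|)
    have e1 : ((2 * M : ℕ) : ℝ) * h = 0 + 2 * π := by push_cast; rw [hh]; field_simp; ring
    have e2 : ((2 * M + 1 : ℕ) : ℝ) * h = h + 2 * π := by push_cast; rw [hh]; field_simp; ring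
    rw [e1, e2, ← intervalIntegral.integral_comp_add_right (fun t => |f'' t|)]
    rw [intervalIntegral.integral_congr (g := fun t => |f'' t|) fun t _ => hp'' t]
    simp
  have h5 : 4 * |∑ k ∈ Finset.range (2 * M), G k| ≤ 2 * (h * ∫ t in (0 : ℝ)..(2 * π), |f'' t|) := by
    calc 4 * |∑ k ∈ Finset.range (2 * M), G k| = |4 * ∑ k ∈ Finset.range (2 * M), G k| := by
          rw [abs_mul]; norm_num
      _ ≤ ∑ k ∈ Finset.range (2 * M), |G k + 2 * G (k + 1) + G (k + 1 + 1)| := by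
          rw [h4]; exact Finset.abs_sum_le_sum_abs _ _
      _ ≤ _ := Finset.sum_le_sum fun k _ => hterm k
      _ = _ := by rw [← Finset.mul_sum, Finset.sum_add_distrib, hsum1, hsum2]; ring
  have h6 : π / (2 * M) = h / 2 := by rw [hh]; ring
  rw [h6]
  linarith

lemma int_exp_sin (N : ℕ) (hN : 0 < N) :
    ∫ t in (0 : ℝ)..(2 * π), Real.exp (-(N * Real.sin t ^ 2 / 16)) ≤ 2 * √(π / (N / (4 * π ^ 2))) := by
  set F : ℝ → ℝ := fun t => Real.exp (-(N * Real.sin t ^ 2 / 16)) with hF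
  have hNR : (0 : ℝ) < N := by positivity
  have hpi := Real.pi_pos
  have hc : Continuous F := by rw [hF]; fun_prop
  have hp : Function.Periodic F π := by intro t; simp [hF, Real.sin_add_pi]
  have e1 : ∫ t in (0 : ℝ)..(2 * π), F t = 2 * ∫ t in (-(π / 2))..(π / 2), F t := by
    rw [← intervalIntegral.integral_add_adjacent_intervals (b := π) (hc.intervalIntegrable _ _)
      (hc.intervalIntegrable _ _)]
    have a1 := hp.intervalIntegral_add_eq 0 (-(π / 2))
    have a2 := hp.intervalIntegral_add_eq π (-(π / 2))
    rw [show -(π / 2) + π = π / 2 by ring] at a1 a2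
    rw [zero_add] at a1
    rw [← two_mul] at a2
    rw [a1, a2]; ring
  have hb : (0 : ℝ) < N / (4 * π ^ 2) := by positivity
  have hI := integrable_exp_neg_mul_sq hb
  rw [e1, ← integral_gaussian]
  gcongr
  calc ∫ t in (-(π / 2))..(π / 2), F t
      ≤ ∫ t in (-(π / 2))..(π / 2), Real.exp (-(N / (4 * π ^ 2)) * t ^ 2) := by
        apply intervalIntegral.integral_mono_on (by linarith) (hc.intervalIntegrable _ _)
          hI.intervalIntegrable
        intro t ht
        apply Real.exp_le_exp.mpr
        have := Real.mul_abs_le_abs_sin (x := t) (abs_le.mpr ⟨by linarith [ht.1], ht.2⟩)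
        have h2 := pow_le_pow_left₀ (by positivity) this 2
        rw [sq_abs, mul_pow, sq_abs] at h2
        have h3 : (N : ℝ) / (4 * π ^ 2) * t ^ 2 = N * ((2 / π) ^ 2 * t ^ 2) / 16 := by
          field_simp; ring
        rw [neg_mul, neg_le_neg_iff, h3]
        gcongr
    _ ≤ _ := by
        rw [intervalIntegral.integral_of_le (by linarith)]
        exact MeasureTheory.setIntegral_le_integral hI
          (Filter.Eventually.of_forall fun t => (Real.exp_pos _).le)

lemma f2_bound (N q : ℕ) (h1 : N ≤ 4 * q) (h2 : q + 2 ≤ 2 * N) (hN : 4 ≤ N) (s c : ℝ)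
    (hsc : s ^ 2 + c ^ 2 = 1) :
    |2 * c ^ (q + 4) - (5 * (q + 2 : ℝ) + 2) * s ^ 2 * c ^ (q + 2)
      + (q + 2 : ℝ) * (q + 1) * s ^ 4 * c ^ q| ≤ 2048 * Real.exp (-(N * s ^ 2 / 16)) := by
  have hq1 : (N : ℝ) ≤ 4 * q := by exact_mod_cast h1
  have hq2 : (q : ℝ) + 2 ≤ 2 * N := by exact_mod_cast h2
  have hNR : (4 : ℝ) ≤ N := by exact_mod_cast hN
  set w := s ^ 2 with hw
  have hw0 : 0 ≤ w := sq_nonneg _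
  have hc2 : c ^ 2 ≤ 1 := by linarith
  have hc20 : 0 ≤ c ^ 2 := sq_nonneg _
  set P : ℝ := 2 * (c ^ 2) ^ 2 - (5 * (q + 2 : ℝ) + 2) * w * c ^ 2 + (q + 2 : ℝ) * (q + 1) * w ^ 2
  have e : 2 * c ^ (q + 4) - (5 * (q + 2 : ℝ) + 2) * w * c ^ (q + 2)
      + (q + 2 : ℝ) * (q + 1) * s ^ 4 * c ^ q = P * c ^ q := by
    simp only [P, hw]; ring
  rw [e, abs_mul, abs_pow]
  have hcabs : |c| ≤ Real.exp (-(w / 2)) := by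
    apply abs_le_of_sq_le_sq _ (Real.exp_pos _).le
    rw [← Real.exp_nat_mul]
    have := Real.add_one_le_exp (-w)
    have e2 : ((2 : ℕ) : ℝ) * -(w / 2) = -w := by push_cast; ring
    rw [e2]; linarith
  set v : ℝ := N * w / 16 with hv
  have hv0 : 0 ≤ v := by positivity
  have hcq : |c| ^ q ≤ Real.exp (-(2 * v)) := by
    calc |c| ^ q ≤ Real.exp (-(w / 2)) ^ q := pow_le_pow_left₀ (abs_nonneg _) hcabs _
      _ = Real.exp (q * -(w / 2)) := by rw [← Real.exp_nat_mul]
      _ ≤ _ := by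
        apply Real.exp_le_exp.mpr
        rw [hv]; nlinarith
  have hP : |P| ≤ 2048 * Real.exp v := by
    have hex := Real.quadratic_le_exp_of_nonneg hv0
    have hNw : (N : ℝ) * w = 16 * v := by rw [hv]; ring
    have t1 : 0 ≤ (c ^ 2) ^ 2 ∧ (c ^ 2) ^ 2 ≤ 1 := ⟨by positivity, pow_le_one₀ hc20 hc2⟩
    have t2 : 0 ≤ (5 * (q + 2 : ℝ) + 2) * w * c ^ 2 ∧
        (5 * (q + 2 : ℝ) + 2) * w * c ^ 2 ≤ 12 * (16 * v) := by
      refine ⟨by positivity, ?_⟩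
      calc (5 * (q + 2 : ℝ) + 2) * w * c ^ 2 ≤ (12 * N) * w * 1 := by
            gcongr; linarith
        _ = _ := by rw [mul_one, mul_assoc, hNw]
    have t3 : 0 ≤ (q + 2 : ℝ) * (q + 1) * w ^ 2 ∧
        (q + 2 : ℝ) * (q + 1) * w ^ 2 ≤ 4 * (16 * v) ^ 2 := by
      refine ⟨by positivity, ?_⟩
      calc (q + 2 : ℝ) * (q + 1) * w ^ 2 ≤ (2 * N) * (2 * N) * w ^ 2 := by
            gcongr; linarith
        _ = _ := by rw [← hNw]; ring
    rw [abs_le]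
    constructor <;> simp only [P] <;> nlinarith [sq_nonneg v]
  calc |P| * |c| ^ q ≤ (2048 * Real.exp v) * Real.exp (-(2 * v)) := by gcongr
    _ = 2048 * Real.exp (-v) := by rw [mul_assoc, ← Real.exp_add]; congr 2; ring

lemma Af_bound2 : ∃ C : ℝ, 0 ≤ C ∧ ∀ N M : ℕ, 2 ≤ M → M ≤ N + 1 → 4 ≤ N →
    |Af N M| ≤ C * (√N / (M : ℝ) ^ 2) := by
  refine ⟨π / 2 * (2048 * (2 * √(4 * π ^ 3))), by positivity, ?_⟩
  intro N M hM hMN hN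
  obtain ⟨q, hq⟩ : ∃ q, 2 * N - M = q + 2 := ⟨2 * N - M - 2, by omega⟩
  have hMR : (0 : ℝ) < M := by positivity
  have hNR : (0 : ℝ) < N := by positivity
  have hpi := Real.pi_pos
  set f : ℝ → ℝ := fun x => Real.sin x ^ 2 * Real.cos x ^ (q + 2) with hf
  set f' : ℝ → ℝ := fun x => 2 * Real.sin x * Real.cos x ^ (q + 3)
    - (q + 2) * Real.sin x ^ 3 * Real.cos x ^ (q + 1) with hf'
  set f'' : ℝ → ℝ := fun x => 2 * Real.cos x ^ (q + 4)
    - (5 * (q + 2 : ℝ) + 2) * Real.sin x ^ 2 * Real.cos x ^ (q + 2)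
      + (q + 2 : ℝ) * (q + 1) * Real.sin x ^ 4 * Real.cos x ^ q with hf''
  have d1 : ∀ x, HasDerivAt f (f' x) x := by
    intro x
    have := ((Real.hasDerivAt_sin x).pow 2).mul ((Real.hasDerivAt_cos x).pow (q + 2))
    refine this.congr_deriv (Eq.symm ?_)
    change 2 * Real.sin x * Real.cos x ^ (q + 3) - (q + 2) * Real.sin x ^ 3 * Real.cos x ^ (q + 1) =
      ((2 : ℕ) : ℝ) * Real.sin x ^ 1 * Real.cos x * Real.cos x ^ (q + 2) +
      Real.sin x ^ 2 * (((q + 2 : ℕ) : ℝ) * Real.cos x ^ (q + 1) * -Real.sin x)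
    push_cast; ring
  have d2 : ∀ x, HasDerivAt f' (f'' x) x := by
    intro x
    have a1 := ((Real.hasDerivAt_sin x).const_mul 2).mul ((Real.hasDerivAt_cos x).pow (q + 3))
    have a2 := (((Real.hasDerivAt_sin x).pow 3).const_mul (q + 2 : ℝ)).mul
      ((Real.hasDerivAt_cos x).pow (q + 1))
    refine (a1.sub a2).congr_deriv (Eq.symm ?_)
    change 2 * Real.cos x ^ (q + 4) - (5 * (q + 2 : ℝ) + 2) * Real.sin x ^ 2 * Real.cos x ^ (q + 2)
        + (q + 2 : ℝ) * (q + 1) * Real.sin x ^ 4 * Real.cos x ^ q =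
      (2 * Real.cos x * Real.cos x ^ (q + 3) +
        2 * Real.sin x * (((q + 3 : ℕ) : ℝ) * Real.cos x ^ (q + 2) * -Real.sin x)) -
      ((q + 2 : ℝ) * (((3 : ℕ) : ℝ) * Real.sin x ^ 2 * Real.cos x) * Real.cos x ^ (q + 1) +
        (q + 2 : ℝ) * Real.sin x ^ 3 * (((q + 1 : ℕ) : ℝ) * Real.cos x ^ q * -Real.sin x))
    push_cast; ring
  have hc : Continuous f'' := by rw [hf'']; fun_prop
  have key := alt_sum f f' f'' d1 d2 hc (by intro x; simp [hf]) (by intro x; simp [hf'']) M (by omega)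
  have hA : Af N M = (N : ℝ) / M * ∑ k ∈ Finset.range (2 * M), (-1) ^ (k + 1) * f (th M k) := by
    unfold Af; rw [hq]
  have hI : ∫ t in (0 : ℝ)..(2 * π), |f'' t| ≤ 2048 * (2 * √(π / (N / (4 * π ^ 2)))) := by
    calc _ ≤ ∫ t in (0 : ℝ)..(2 * π), 2048 * Real.exp (-(N * Real.sin t ^ 2 / 16)) := by
          apply intervalIntegral.integral_mono_on (by positivity) (hc.abs.intervalIntegrable _ _)
            (Continuous.intervalIntegrable (by fun_prop) _ _)
          intro t _
          exact f2_bound N q (by omega) (by omega) hN _ _ (Real.sin_sq_add_cos_sq t)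
      _ ≤ _ := by
          rw [intervalIntegral.integral_const_mul]
          gcongr
          exact int_exp_sin N (by omega)
  rw [hA, abs_mul, abs_of_nonneg (by positivity : (0 : ℝ) ≤ (N : ℝ) / M)]
  have hsq : √(π / (N / (4 * π ^ 2))) = √(4 * π ^ 3) / √N := by
    rw [← Real.sqrt_div' _ hNR.le]; congr 1; field_simp
  have hNs : (N : ℝ) = √N * √N := (Real.mul_self_sqrt hNR.le).symm
  have hs0 : 0 < √(N : ℝ) := Real.sqrt_pos.mpr hNR
  calc _ ≤ (N : ℝ) / M * (π / (2 * M) * (2048 * (2 * (√(4 * π ^ 3) / √N)))) := by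
        rw [← hsq]
        gcongr
        exact key.trans (by gcongr)
    _ = _ := by
        rw [div_mul_eq_mul_div]
        nth_rewrite 1 [hNs]
        field_simp

/-- terms of the limiting density -/
noncomputable def hk (t : ℝ) (k : ℕ) : ℝ :=
  4 / t * ((-1) ^ (k + 1) * (π ^ 2 * k ^ 2 / t ^ 2 * Real.exp (-(π ^ 2 * k ^ 2 / t ^ 2))))

/-- the discretised variable -/
noncomputable def Mt (t : ℝ) (N : ℕ) : ℕ := ⌈t * √(N : ℝ)⌉₊

lemma sqrtN_atTop : Filter.Tendsto (fun N : ℕ => √(N : ℝ)) Filter.atTop Filter.atTop :=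
  Real.tendsto_sqrt_atTop.comp tendsto_natCast_atTop_atTop

lemma Mt_div (t : ℝ) (ht : 0 < t) :
    Filter.Tendsto (fun N : ℕ => (Mt t N : ℝ) / √(N : ℝ)) Filter.atTop (𝓝 t) :=
  (tendsto_nat_ceil_mul_div_atTop ht.le).comp sqrtN_atTop

lemma Mt_atTop (t : ℝ) (ht : 0 < t) :
    Filter.Tendsto (fun N : ℕ => (Mt t N : ℝ)) Filter.atTop Filter.atTop :=
  Filter.tendsto_atTop_mono (fun _ => Nat.le_ceil _) (sqrtN_atTop.const_mul_atTop ht)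

lemma Mt_ge (t : ℝ) (ht : 0 < t) (K : ℕ) : ∀ᶠ N in Filter.atTop, K < Mt t N := by
  filter_upwards [(Mt_atTop t ht).eventually_gt_atTop (K : ℝ)] with N hN
  exact_mod_cast hN

lemma Mt_le (t : ℝ) (ht : 0 < t) : ∀ᶠ N in Filter.atTop, Mt t N ≤ N + 1 := by
  filter_upwards [sqrtN_atTop.eventually_ge_atTop t] with N hN
  have h1 : (Mt t N : ℝ) < t * √(N : ℝ) + 1 := Nat.ceil_lt_add_one (by positivity)
  have h2 : t * √(N : ℝ) ≤ N := by
    calc _ ≤ √(N : ℝ) * √(N : ℝ) := by gcongr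
      _ = N := Real.mul_self_sqrt (by positivity)
  have : (Mt t N : ℝ) ≤ ((N + 1 : ℕ) : ℝ) := by push_cast; linarith
  exact_mod_cast this

lemma sin_lim (t : ℝ) (ht : 0 < t) (k : ℕ) :
    Filter.Tendsto (fun N : ℕ => (N : ℝ) * Real.sin (th (Mt t N) k) ^ 2) Filter.atTop
      (𝓝 (π ^ 2 * k ^ 2 / t ^ 2)) := by
  have h0 : Filter.Tendsto (fun N : ℕ => th (Mt t N) k) Filter.atTop (𝓝 0) :=
    (Mt_atTop t ht).const_div_atTop _
  have h1 : Filter.Tendsto (fun N : ℕ => Real.sinc (th (Mt t N) k)) Filter.atTop (𝓝 1) := by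
    have := (Real.continuous_sinc.tendsto 0).comp h0
    rwa [Real.sinc_zero] at this
  have h2 : Filter.Tendsto (fun N : ℕ => π * k / ((Mt t N : ℝ) / √(N : ℝ))) Filter.atTop
      (𝓝 (π * k / t)) := tendsto_const_nhds.div (Mt_div t ht) ht.ne'
  have h3 := (h2.mul h1).pow 2
  have e : (π * k / t * 1) ^ 2 = π ^ 2 * k ^ 2 / t ^ 2 := by ring
  rw [e] at h3
  refine h3.congr' ?_
  filter_upwards [Mt_ge t ht 0, Filter.eventually_gt_atTop 0] with N hM hN
  have hM' : (0 : ℝ) < Mt t N := by exact_mod_cast hM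
  have hN' : (0 : ℝ) < N := by exact_mod_cast hN
  have hs : Real.sin (th (Mt t N) k) = th (Mt t N) k * Real.sinc (th (Mt t N) k) := by
    by_cases hz : th (Mt t N) k = 0
    · rw [hz]; simp
    · rw [Real.sinc_of_ne_zero hz]; field_simp
  rw [hs]
  have : π * k / ((Mt t N : ℝ) / √(N : ℝ)) = √(N : ℝ) * th (Mt t N) k := by
    unfold th; field_simp
  rw [this]
  have h := Real.mul_self_sqrt hN'.le
  calc _ = (√(N : ℝ) * √(N : ℝ)) * (th (Mt t N) k * Real.sinc (th (Mt t N) k)) ^ 2 := by ring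
    _ = _ := by rw [h]

lemma cos_lim (t : ℝ) (ht : 0 < t) (k : ℕ) :
    Filter.Tendsto (fun N : ℕ => Real.cos (th (Mt t N) k) ^ (2 * N - Mt t N)) Filter.atTop
      (𝓝 (Real.exp (-(π ^ 2 * k ^ 2 / t ^ 2)))) := by
  have h0 : Filter.Tendsto (fun N : ℕ => th (Mt t N) k) Filter.atTop (𝓝 0) :=
    (Mt_atTop t ht).const_div_atTop _
  have hcos : ∀ᶠ N : ℕ in Filter.atTop, 0 < Real.cos (th (Mt t N) k) := by
    have := (Real.continuous_cos.tendsto 0).comp h0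
    rw [Real.cos_zero] at this
    exact (Filter.Tendsto.eventually_const_lt one_pos this)
  have h1 : Filter.Tendsto (fun N : ℕ => (1 + -(Real.sin (th (Mt t N) k) ^ 2)) ^ N) Filter.atTop
      (𝓝 (Real.exp (-(π ^ 2 * k ^ 2 / t ^ 2)))) := by
    apply Real.tendsto_one_add_pow_exp_of_tendsto
    simpa using (sin_lim t ht k).neg
  have h2 : Filter.Tendsto (fun N : ℕ => Real.cos (th (Mt t N) k) ^ (Mt t N)) Filter.atTop
      (𝓝 1) := by
    have a : Filter.Tendsto (fun N : ℕ => 1 + -((π * k) ^ 2 / 2 / (Mt t N : ℝ))) Filter.atTop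
        (𝓝 (1 + -0)) := tendsto_const_nhds.add ((Mt_atTop t ht).const_div_atTop _).neg
    rw [neg_zero, add_zero] at a
    refine tendsto_of_tendsto_of_tendsto_of_le_of_le' a tendsto_const_nhds ?_ ?_
    · have hth : ∀ᶠ N : ℕ in Filter.atTop, |th (Mt t N) k| < 1 := by
        have := h0.abs
        rw [abs_zero] at this
        exact this.eventually_lt_const one_pos
      filter_upwards [hth, Mt_ge t ht 0] with N h hM
      have hM' : (0 : ℝ) < Mt t N := by exact_mod_cast hM
      have hsq : th (Mt t N) k ^ 2 ≤ 1 := by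
        rw [← sq_abs]; exact pow_le_one₀ (abs_nonneg _) h.le
      have b := one_add_mul_le_pow (a := -(th (Mt t N) k ^ 2 / 2)) (by linarith) (Mt t N)
      calc _ = 1 + (Mt t N : ℝ) * -(th (Mt t N) k ^ 2 / 2) := by unfold th; field_simp
        _ ≤ _ := b
        _ ≤ _ := by
          apply pow_le_pow_left₀ (by linarith)
          linarith [Real.one_sub_sq_div_two_le_cos (x := th (Mt t N) k)]
    · filter_upwards [hcos] with N h
      exact pow_le_one₀ h.le (Real.cos_le_one _)
  have h3 := h1.div h2 one_ne_zero
  rw [div_one] at h3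
  refine h3.congr' ?_
  filter_upwards [hcos, Mt_le t ht, Filter.eventually_ge_atTop 1] with N h hM hN
  have e : 1 + -(Real.sin (th (Mt t N) k) ^ 2) = Real.cos (th (Mt t N) k) ^ 2 := by
    linarith [Real.sin_sq_add_cos_sq (th (Mt t N) k)]
  simp only [Pi.div_apply]
  rw [e, ← pow_mul, div_eq_iff (by positivity), ← pow_add]
  congr 1; omega

lemma term_lim (t : ℝ) (ht : 0 < t) (k : ℕ) :
    Filter.Tendsto (fun N : ℕ => √(N : ℝ) * Tf N (Mt t N) k) Filter.atTop (𝓝 (hk t k)) := by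
  have h1 : Filter.Tendsto (fun N : ℕ => 4 / ((Mt t N : ℝ) / √(N : ℝ))) Filter.atTop
      (𝓝 (4 / t)) := tendsto_const_nhds.div (Mt_div t ht) ht.ne'
  have h2 := h1.mul (((sin_lim t ht k).mul (cos_lim t ht k)).const_mul ((-1) ^ (k + 1)))
  refine h2.congr' ?_
  filter_upwards [Mt_ge t ht (2 * k), Filter.eventually_gt_atTop 0] with N hM hN
  have hM' : (0 : ℝ) < Mt t N := by exact_mod_cast (Nat.zero_le _).trans_lt hM
  have hN' : (0 : ℝ) < N := by exact_mod_cast hN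
  unfold Tf
  rw [if_pos hM]
  field_simp

lemma Af_lim (t : ℝ) (ht : 0 < t) :
    Filter.Tendsto (fun N : ℕ => √(N : ℝ) * Af N (Mt t N)) Filter.atTop (𝓝 (∑' k, hk t k)) := by
  have key : Filter.Tendsto (fun N : ℕ => ∑' k, √(N : ℝ) * Tf N (Mt t N) k) Filter.atTop
      (𝓝 (∑' k, hk t k)) := by
    refine tendsto_tsum_of_dominated_convergence
      (bound := fun k => 8 * π ^ 2 * (t + 1) * (1 / (k : ℝ) ^ 2)) (summ2.mul_left _)
      (term_lim t ht) ?_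
    filter_upwards [Mt_ge t ht 1, Mt_le t ht, Filter.eventually_ge_atTop 2,
      (Mt_div t ht).eventually_lt_const (show t < t + 1 by linarith)] with N h1 h2 h3 h4 k
    have hN' : (0 : ℝ) < N := by positivity
    rw [Real.norm_eq_abs, abs_mul, abs_of_nonneg (Real.sqrt_nonneg _)]
    calc _ ≤ √(N : ℝ) * (8 * π ^ 2 * ((Mt t N : ℝ) / N) * (1 / (k : ℝ) ^ 2)) := by
          gcongr; exact Tf_bound N _ k h1 h2 h3
      _ = 8 * π ^ 2 * ((Mt t N : ℝ) / √(N : ℝ)) * (1 / (k : ℝ) ^ 2) := by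
          have : √(N : ℝ) / N = 1 / √(N : ℝ) := by
            rw [Real.sqrt_div_self']
          calc _ = 8 * π ^ 2 * ((Mt t N : ℝ) * (√(N : ℝ) / N)) * (1 / (k : ℝ) ^ 2) := by ring
            _ = _ := by rw [this]; ring
      _ ≤ _ := by gcongr
  refine key.congr' ?_
  filter_upwards [Mt_ge t ht 1, Mt_le t ht, Filter.eventually_ge_atTop 2] with N h1 h2 h3
  rw [Af_eq N _ h1 h2 h3, tsum_mul_left]
  congr 1
  apply tsum_eq_sum
  intro k hk
  rw [Finset.mem_range] at hk
  unfold Tf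
  rw [if_neg (by omega)]

/-- terms of the antiderivative -/
noncomputable def pk (k : ℕ) (t : ℝ) : ℝ :=
  2 * ((-1) ^ (k + 1) * Real.exp (-(π ^ 2 * k ^ 2 / t ^ 2)))

lemma exp_neg_le1 (y : ℝ) (hy : 0 < y) : Real.exp (-y) ≤ 1 / y := by
  rw [Real.exp_neg, inv_eq_one_div]
  apply one_div_le_one_div_of_le hy
  linarith [Real.add_one_le_exp y]

lemma one_le_pi_sq : 1 ≤ π ^ 2 := by nlinarith [Real.pi_gt_three]

lemma pk_bound (k : ℕ) (t : ℝ) (ht : 0 < t) :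
    |pk k t| ≤ 2 * t ^ 2 * (1 / (k : ℝ) ^ 2) + (if k = 0 then 2 else 0) := by
  unfold pk
  rw [abs_mul, abs_mul, abs_pow, abs_neg, abs_one, one_pow, one_mul, abs_of_nonneg zero_le_two,
    abs_of_pos (Real.exp_pos _)]
  rcases Nat.eq_zero_or_pos k with rfl | hk
  · simp
  · have hk' : (0 : ℝ) < k := by positivity
    rw [if_neg hk.ne', add_zero]
    have h1 := exp_neg_le1 (π ^ 2 * k ^ 2 / t ^ 2) (by positivity)
    have h2 : 1 / (π ^ 2 * k ^ 2 / t ^ 2) ≤ t ^ 2 * (1 / (k : ℝ) ^ 2) := by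
      rw [one_div_div, mul_one_div]
      gcongr
      nlinarith [one_le_pi_sq, sq_nonneg (k : ℝ)]
    linarith

lemma summ_bound (c : ℝ) :
    Summable (fun k : ℕ => c * (1 / (k : ℝ) ^ 2) + (if k = 0 then (2 : ℝ) else 0)) := by
  apply (summ2.mul_left c).add
  apply summable_of_ne_finset_zero (s := {0})
  intro k hk
  rw [Finset.mem_singleton] at hk
  rw [if_neg hk]

lemma pk_summable (t : ℝ) (ht : 0 < t) : Summable (fun k => pk k t) :=
  Summable.of_norm_bounded (summ_bound _) (fun k => pk_bound k t ht)

lemma pk_deriv (k : ℕ) (t : ℝ) (ht : 0 < t) : HasDerivAt (pk k) (hk t k) t := by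
  have h1 : HasDerivAt (fun t : ℝ => -(π ^ 2 * k ^ 2 / t ^ 2))
      (-((0 * t ^ 2 - π ^ 2 * k ^ 2 * (((2 : ℕ) : ℝ) * t ^ (2 - 1))) / (t ^ 2) ^ 2)) t :=
    ((hasDerivAt_const t (π ^ 2 * (k : ℝ) ^ 2)).div (hasDerivAt_pow 2 t) (by positivity)).neg
  have h2 := (h1.exp.const_mul ((-1 : ℝ) ^ (k + 1))).const_mul 2
  refine h2.congr_deriv ?_
  unfold hk
  norm_num
  field_simp
  ring

lemma hk_bound (k : ℕ) (t : ℝ) (ht : 0 < t) : |hk t k| ≤ 8 * t * (1 / (k : ℝ) ^ 2) := by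
  unfold hk
  rcases Nat.eq_zero_or_pos k with rfl | hk
  · simp
  have hk' : (0 : ℝ) < k := by positivity
  rw [abs_mul, abs_mul, abs_pow, abs_neg, abs_one, one_pow, one_mul,
    abs_of_nonneg (by positivity), abs_of_nonneg (by positivity)]
  set y := π ^ 2 * (k : ℝ) ^ 2 / t ^ 2 with hy
  have hy0 : 0 < y := by positivity
  calc 4 / t * (y * Real.exp (-y)) ≤ 4 / t * (y * (2 / y ^ 2)) := by
        gcongr; exact exp_neg_le y hy0
    _ = 8 / t * (1 / y) := by field_simp; ring
    _ ≤ 8 / t * (t ^ 2 / k ^ 2) := by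
        apply mul_le_mul_of_nonneg_left _ (by positivity)
        rw [hy, one_div_div]
        gcongr
        nlinarith [one_le_pi_sq, sq_nonneg (k : ℝ)]
    _ = _ := by field_simp

lemma Psi_deriv (t : ℝ) (ht : 0 < t) :
    HasDerivAt (fun t => ∑' k, pk k t) (∑' k, hk t k) t := by
  refine hasDerivAt_tsum_of_isPreconnected (t := Set.Ioo 0 (t + 1)) (y₀ := t)
    (u := fun k : ℕ => 8 * (t + 1) * (1 / (k : ℝ) ^ 2)) (summ2.mul_left _) isOpen_Ioo
    isPreconnected_Ioo (fun k y hy => pk_deriv k y hy.1) ?_ ⟨ht, by linarith⟩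
    (pk_summable t ht) ⟨ht, by linarith⟩
  intro k y hy
  refine (hk_bound k y hy.1).trans ?_
  gcongr
  exact hy.2.le

lemma Psi_zero : Filter.Tendsto (fun t => ∑' k, pk k t) (𝓝[>] 0) (𝓝 (-2)) := by
  have e : ∑' k : ℕ, (if k = 0 then (-2 : ℝ) else 0) = -2 := by
    rw [tsum_eq_single 0 (fun k hk => by rw [if_neg hk])]; simp
  rw [← e]
  refine tendsto_tsum_of_dominated_convergence (summ_bound 2) ?_ ?_
  · intro k
    rcases Nat.eq_zero_or_pos k with rfl | hk
    · simp [pk]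
    · rw [if_neg hk.ne']
      have hk' : (0 : ℝ) < k := by positivity
      have h1 : Filter.Tendsto (fun t : ℝ => π ^ 2 * k ^ 2 / t ^ 2) (𝓝[>] 0) Filter.atTop := by
        have a : Filter.Tendsto (fun t : ℝ => t⁻¹ ^ 2) (𝓝[>] 0) Filter.atTop :=
          (Filter.tendsto_pow_atTop two_ne_zero).comp tendsto_inv_nhdsGT_zero
        refine (a.const_mul_atTop (show 0 < π ^ 2 * (k : ℝ) ^ 2 by positivity)).congr ?_
        intro t
        rw [inv_pow, div_eq_mul_inv]
      have h2 := ((Real.tendsto_exp_neg_atTop_nhds_zero.comp h1).const_mul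
        ((-1 : ℝ) ^ (k + 1))).const_mul 2
      simpa [pk] using h2
  · filter_upwards [Ioo_mem_nhdsGT one_pos] with t ht k
    refine (pk_bound k t ht.1).trans ?_
    gcongr
    nlinarith [ht.1, ht.2]

lemma Psi_top : Filter.Tendsto (fun t => ∑' k, pk k t) Filter.atTop (𝓝 (-1)) := by
  set C : ℝ := ∑' n : ℤ, 1 / |(n : ℝ) + (-1 / 2)| ^ (2 : ℝ) with hC
  have hS : Summable fun n : ℤ => 1 / |(n : ℝ) + (-1 / 2)| ^ (2 : ℝ) :=
    (Real.summable_one_div_int_add_rpow _ _).mpr one_lt_two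
  have key : ∀ t : ℝ, 0 < t → |(∑' k, pk k t) + 1| ≤ C * √π / (t * π) := by
    intro t ht
    have hpi := Real.pi_pos
    set a : ℝ := π / t ^ 2 with ha
    have ha0 : 0 < a := by positivity
    set f : ℤ → ℝ := fun n => (-1) ^ n * Real.exp (-(π ^ 2 * n ^ 2 / t ^ 2)) with hf
    have hfn : ∀ n : ℕ, f n = -(1 / 2) * pk n t := by
      intro n; simp only [hf, pk, zpow_natCast, Int.cast_natCast]; rw [pow_succ]; ring
    have hfneg : ∀ n : ℤ, f (-n) = f n := by
      intro n; simp only [hf]; rw [zpow_neg, ← inv_zpow]; norm_num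
    have s1 : Summable fun n : ℕ => f n := by
      simp only [hfn]; exact (pk_summable t ht).mul_left _
    have s2 : Summable f := Summable.of_nat_of_neg s1 (by simpa only [hfneg] using s1)
    have hsum : ∑' k, pk k t = -((∑' n, f n) + 1) := by
      have h := s2.hasSum.nat_add_neg
      have h0 : f 0 = 1 := by simp [hf]
      rw [h0] at h
      rw [← h.neg.tsum_eq]
      congr 1; ext k
      rw [hfneg, hfn]; ring
    have hT := Complex.tsum_exp_neg_quadratic (a := (a : ℂ)) (by simpa using ha0) (Complex.I / 2)
    have hL : ∀ n : ℤ, Complex.exp (-π * (a : ℂ) * (n : ℂ) ^ 2 + 2 * π * (Complex.I / 2) * n) =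
        ((f n : ℝ) : ℂ) := by
      intro n
      rw [Complex.exp_add]
      have e1 : Complex.exp (2 * π * (Complex.I / 2) * n) = (-1) ^ n := by
        rw [← Complex.exp_pi_mul_I, ← Complex.exp_int_mul]; congr 1; ring
      rw [e1]
      simp only [hf, ha]
      push_cast
      rw [mul_comm]
      congr 2
      field_simp
    simp only [hL] at hT
    have hR : ∀ n : ℤ, ‖Complex.exp (-π / (a : ℂ) * ((n : ℂ) + Complex.I * (Complex.I / 2)) ^ 2)‖ ≤
        a / π * (1 / |(n : ℝ) + (-1 / 2)| ^ (2 : ℝ)) := by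
      intro n
      have e1 : -π / (a : ℂ) * ((n : ℂ) + Complex.I * (Complex.I / 2)) ^ 2 =
          ((-(π / a * ((n : ℝ) + (-1 / 2)) ^ 2) : ℝ) : ℂ) := by
        have : Complex.I * (Complex.I / 2) = -1 / 2 := by
          rw [← mul_div_assoc, Complex.I_mul_I]
        rw [this]; push_cast; ring
      have hne : (n : ℝ) + (-1 / 2) ≠ 0 := by
        intro h
        have : (2 * n : ℝ) = 1 := by linarith
        have : 2 * n = 1 := by exact_mod_cast this
        omega
      rw [e1, ← Complex.ofReal_exp, Complex.norm_real, Real.norm_eq_abs,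
        abs_of_pos (Real.exp_pos _), Real.rpow_two, sq_abs]
      refine (exp_neg_le1 _ (by positivity)).trans (le_of_eq ?_)
      field_simp
    have hB := tsum_of_norm_bounded ((hS.mul_left (a / π)).hasSum) hR
    rw [tsum_mul_left, ← hC] at hB
    have hn : |∑' n, f n| = ‖∑' n : ℤ, ((f n : ℝ) : ℂ)‖ := by
      rw [← Complex.ofReal_tsum, Complex.norm_real, Real.norm_eq_abs]
    rw [hsum, show -((∑' n, f n) + 1) + 1 = -(∑' n, f n) by ring, abs_neg, hn, hT, norm_mul]
    have hq : ‖1 / (a : ℂ) ^ (1 / 2 : ℂ)‖ = 1 / √a := by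
      rw [norm_div, norm_one, Complex.norm_cpow_eq_rpow_re_of_pos ha0, Real.sqrt_eq_rpow]
      norm_num
    rw [hq]
    have hsa : √a = √π / t := by
      rw [ha, Real.sqrt_div hpi.le, Real.sqrt_sq ht.le]
    calc _ ≤ 1 / √a * (a / π * C) := by gcongr
      _ = _ := by
        rw [hsa, ha]
        have := Real.sq_sqrt hpi.le
        have hsp : 0 < √π := Real.sqrt_pos.mpr hpi
        field_simp
        rw [this]
  have hlim : Filter.Tendsto (fun t : ℝ => C * √π / (t * π)) Filter.atTop (𝓝 0) :=
    (Filter.tendsto_id.atTop_mul_const Real.pi_pos).const_div_atTop _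
  have : Filter.Tendsto (fun t => (∑' k, pk k t) + 1) Filter.atTop (𝓝 0) := by
    apply squeeze_zero_norm' _ hlim
    filter_upwards [Filter.eventually_gt_atTop 0] with t ht
    exact key t ht
  simpa using this.add_const (-1)

lemma H_integral (hint : MeasureTheory.IntegrableOn (fun t => ∑' k, hk t k) (Set.Ioi 0)) :
    ∫ t in Set.Ioi (0 : ℝ), ∑' k, hk t k = 1 := by
  set F : ℝ → ℝ := Function.update (fun t => ∑' k, pk k t) 0 (-2) with hF
  have h1 : ContinuousWithinAt F (Set.Ici 0) 0 := by
    rw [hF, continuousWithinAt_update_same, Set.Ici_sdiff_left]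
    exact Psi_zero
  have heq : ∀ t ∈ Set.Ioi (0 : ℝ), F t = ∑' k, pk k t := by
    intro t ht
    rw [hF, Function.update_of_ne (ne_of_gt ht)]
  have h2 : ∀ t ∈ Set.Ioi (0 : ℝ), HasDerivAt F (∑' k, hk t k) t := by
    intro t ht
    refine (Psi_deriv t ht).congr_of_eventuallyEq ?_
    filter_upwards [Ioi_mem_nhds ht] with s hs using heq s hs
  have h3 : Filter.Tendsto F Filter.atTop (𝓝 (-1)) := by
    refine Psi_top.congr' ?_
    filter_upwards [Filter.eventually_gt_atTop 0] with t ht using (heq t ht).symm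
  rw [MeasureTheory.integral_Ioi_of_hasDerivAt_of_tendsto h1 h2 hint h3, hF,
    Function.update_self]
  norm_num

/-- step-function rewriting of the sum -/
noncomputable def Gf (N : ℕ) (t : ℝ) : ℝ :=
  if 2 ≤ Mt t N ∧ Mt t N ≤ N + 1 then √(N : ℝ) * Af N (Mt t N) else 0

lemma Gf_meas (N : ℕ) : Measurable (Gf N) := by
  have h1 : Measurable (fun t : ℝ => Mt t N) :=
    Nat.measurable_ceil.comp (measurable_id.mul_const _)
  have h2 : Measurable (fun M : ℕ => if 2 ≤ M ∧ M ≤ N + 1 then √(N : ℝ) * Af N M else 0) :=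
    measurable_from_nat
  exact h2.comp h1

lemma step_integral (N : ℕ) :
    ∫ x in Set.Ioi (0 : ℝ), (if 2 ≤ ⌈x⌉₊ ∧ ⌈x⌉₊ ≤ N + 1 then Af N ⌈x⌉₊ else 0) =
      ∑ M ∈ Finset.Icc 2 (N + 1), Af N M := by
  have e : ∀ x : ℝ, (if 2 ≤ ⌈x⌉₊ ∧ ⌈x⌉₊ ≤ N + 1 then Af N ⌈x⌉₊ else 0) =
      ∑ M ∈ Finset.Icc 2 (N + 1),
        (Set.Ioc (((M - 1 : ℕ) : ℝ)) (M : ℝ)).indicator (fun _ => Af N M) x := by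
    intro x
    have h : ∀ M ∈ Finset.Icc 2 (N + 1),
        (Set.Ioc (((M - 1 : ℕ) : ℝ)) (M : ℝ)).indicator (fun _ => Af N M) x =
          if ⌈x⌉₊ = M then Af N M else 0 := by
      intro M hM
      rw [Finset.mem_Icc] at hM
      rw [Set.indicator_apply]
      congr 1
      apply propext
      rw [Nat.ceil_eq_iff (by omega)]
      rfl
    rw [Finset.sum_congr rfl h, Finset.sum_ite_eq]
    simp only [Finset.mem_Icc]
  simp only [e]
  rw [MeasureTheory.integral_finsetSum]
  · apply Finset.sum_congr rfl
    intro M hM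
    rw [Finset.mem_Icc] at hM
    rw [MeasureTheory.setIntegral_indicator measurableSet_Ioc]
    have : Set.Ioi (0 : ℝ) ∩ Set.Ioc (((M - 1 : ℕ) : ℝ)) (M : ℝ) =
        Set.Ioc (((M - 1 : ℕ) : ℝ)) (M : ℝ) := by
      apply Set.inter_eq_right.mpr
      intro x hx
      exact lt_of_le_of_lt (Nat.cast_nonneg _) hx.1
    rw [this, MeasureTheory.setIntegral_const, Real.volume_real_Ioc]
    have : ((M - 1 : ℕ) : ℝ) = M - 1 := by push_cast [show 1 ≤ M by omega]; ring
    rw [this]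
    simp
  · intro M _
    apply MeasureTheory.Integrable.integrableOn
    apply MeasureTheory.IntegrableOn.integrable_indicator _ measurableSet_Ioc
    exact MeasureTheory.integrableOn_const (by simp)

lemma Gf_integral (N : ℕ) (hN : 0 < N) :
    ∫ t in Set.Ioi (0 : ℝ), Gf N t = ∑ M ∈ Finset.Icc 2 (N + 1), Af N M := by
  have hs : 0 < √(N : ℝ) := Real.sqrt_pos.mpr (by positivity)
  have h := MeasureTheory.integral_comp_mul_left_Ioi
    (fun x : ℝ => if 2 ≤ ⌈x⌉₊ ∧ ⌈x⌉₊ ≤ N + 1 then Af N ⌈x⌉₊ else 0) 0 hs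
  rw [mul_zero, step_integral] at h
  have e : ∀ t : ℝ, Gf N t = √(N : ℝ) * (if 2 ≤ ⌈√(N : ℝ) * t⌉₊ ∧ ⌈√(N : ℝ) * t⌉₊ ≤ N + 1 then
      Af N ⌈√(N : ℝ) * t⌉₊ else 0) := by
    intro t
    unfold Gf Mt
    rw [mul_comm t]
    split_ifs <;> simp
  simp only [e]
  rw [MeasureTheory.integral_const_mul, h, smul_eq_mul, mul_inv_cancel_left₀ hs.ne']

lemma Gf_bound : ∃ D : ℝ, ∀ N : ℕ, 4 ≤ N → ∀ t : ℝ, 0 < t → ‖Gf N t‖ ≤ D * (1 + t ^ 2)⁻¹ := by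
  obtain ⟨C1, hC1, h1⟩ := Af_bound1
  obtain ⟨C2, hC2, h2⟩ := Af_bound2
  refine ⟨4 * C1 + 2 * C2, ?_⟩
  intro N hN t ht
  unfold Gf
  split_ifs with h
  swap
  · rw [norm_zero]; positivity
  have hNR : (0 : ℝ) < N := by positivity
  have hs : 0 < √(N : ℝ) := Real.sqrt_pos.mpr hNR
  have hss : √(N : ℝ) * √(N : ℝ) = N := Real.mul_self_sqrt hNR.le
  have b1 := h1 N (Mt t N) h.1 h.2 (by omega)
  have b2 := h2 N (Mt t N) h.1 h.2 hN
  have l1 : t * √(N : ℝ) ≤ Mt t N := Nat.le_ceil _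
  have l2 : (Mt t N : ℝ) < t * √(N : ℝ) + 1 := Nat.ceil_lt_add_one (by positivity)
  have l3 : (2 : ℝ) ≤ Mt t N := by exact_mod_cast h.1
  have hM0 : (0 : ℝ) < Mt t N := by linarith
  rw [Real.norm_eq_abs, abs_mul, abs_of_pos hs]
  have c1 : √(N : ℝ) * |Af N (Mt t N)| ≤ C1 * (2 * t) := by
    calc _ ≤ √(N : ℝ) * (C1 * ((Mt t N : ℝ) / N)) := by gcongr
      _ ≤ √(N : ℝ) * (C1 * ((2 * (t * √(N : ℝ))) / N)) := by gcongr; linarith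
      _ = C1 * (2 * t) * (√(N : ℝ) * √(N : ℝ)) / N := by ring
      _ = _ := by rw [hss]; field_simp
  have c2 : √(N : ℝ) * |Af N (Mt t N)| ≤ C2 * (1 / t ^ 2) := by
    calc _ ≤ √(N : ℝ) * (C2 * (√(N : ℝ) / (Mt t N : ℝ) ^ 2)) := by gcongr
      _ ≤ √(N : ℝ) * (C2 * (√(N : ℝ) / (t * √(N : ℝ)) ^ 2)) := by gcongr
      _ = _ := by field_simp
  rw [← div_eq_mul_inv, le_div_iff₀ (by positivity)]
  rcases le_total t 1 with h' | h'
  · calc _ ≤ C1 * (2 * t) * (1 + t ^ 2) := by gcongr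
      _ ≤ C1 * (2 * 1) * (1 + 1 ^ 2) := by gcongr
      _ ≤ _ := by linarith
  · calc _ ≤ C2 * (1 / t ^ 2) * (1 + t ^ 2) := by gcongr
      _ ≤ C2 * (1 / t ^ 2) * (t ^ 2 + t ^ 2) := by gcongr; nlinarith
      _ = 2 * C2 := by field_simp; ring
      _ ≤ _ := by linarith

lemma Gf_lim (t : ℝ) (ht : 0 < t) :
    Filter.Tendsto (fun N : ℕ => Gf N t) Filter.atTop (𝓝 (∑' k, hk t k)) := by
  refine (Af_lim t ht).congr' ?_
  filter_upwards [Mt_ge t ht 1, Mt_le t ht] with N h1 h2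
  unfold Gf
  rw [if_pos ⟨h1, h2⟩]

lemma sum_lim : Filter.Tendsto (fun N : ℕ => ∑ M ∈ Finset.Icc 2 (N + 1), Af N M) Filter.atTop
    (𝓝 1) := by
  obtain ⟨D, hD⟩ := Gf_bound
  have hI : MeasureTheory.IntegrableOn (fun t : ℝ => D * (1 + t ^ 2)⁻¹) (Set.Ioi 0) :=
    (integrable_inv_one_add_sq.const_mul D).integrableOn
  have hmeas : ∀ N : ℕ, MeasureTheory.AEStronglyMeasurable (Gf (N + 4))
      (MeasureTheory.volume.restrict (Set.Ioi 0)) :=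
    fun N => (Gf_meas _).aestronglyMeasurable
  have hbd : ∀ N : ℕ, ∀ᵐ t ∂(MeasureTheory.volume.restrict (Set.Ioi (0 : ℝ))),
      ‖Gf (N + 4) t‖ ≤ D * (1 + t ^ 2)⁻¹ := by
    intro N
    filter_upwards [MeasureTheory.ae_restrict_mem measurableSet_Ioi] with t ht
    exact hD _ (by omega) t ht
  have hl : ∀ᵐ t ∂(MeasureTheory.volume.restrict (Set.Ioi (0 : ℝ))),
      Filter.Tendsto (fun N : ℕ => Gf (N + 4) t) Filter.atTop (𝓝 (∑' k, hk t k)) := by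
    filter_upwards [MeasureTheory.ae_restrict_mem measurableSet_Ioi] with t ht
    exact (Filter.tendsto_add_atTop_iff_nat 4).mpr (Gf_lim t ht)
  have key := MeasureTheory.tendsto_integral_of_dominated_convergence _ hmeas hI hbd hl
  have hint : MeasureTheory.IntegrableOn (fun t => ∑' k, hk t k) (Set.Ioi 0) := by
    refine MeasureTheory.Integrable.mono' hI
      (aestronglyMeasurable_of_tendsto_ae Filter.atTop hmeas hl) ?_
    filter_upwards [hl, MeasureTheory.ae_restrict_mem measurableSet_Ioi] with t ht ht0
    exact le_of_tendsto ht.norm (Filter.Eventually.of_forall fun N => hD _ (by omega) t ht0)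
  rw [H_integral hint] at key
  rw [← Filter.tendsto_add_atTop_iff_nat 4]
  refine key.congr ?_
  intro N
  exact Gf_integral (N + 4) (by omega)

/-- At the critical coupling `μ₀ = −ln 2` one has `W_N = (1/(2N))·4^N·(1 + o(1))`, i.e.
`W_N · 2N / 4^N → 1` as `N → ∞`. -/
theorem Wcrit_asymptotics :
    Filter.Tendsto (fun N : ℕ => Wcrit N * (2 * (N : ℂ)) / 4 ^ N) Filter.atTop (𝓝 1) := by
  simp only [Wcrit_eq]
  have := (Complex.continuous_ofReal.tendsto 1).comp sum_lim
  rw [Complex.ofReal_one] at this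
  exact this
end
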